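/- If G is a finite or infinite connected graph on at least 6 vertices, then there exists an edge colouring of G with 2 colours that breaks every small automorphism of G; i.e., the small distinguishing index D'_s(G) is at most 2. -/

import Mathlib

open SimpleGraph

/-- An edge colouring `c` preserves an automorphism `φ` if every edge is mapped
to an edge of the same colour. -/
def Preserves {V C : Type*} (G : SimpleGraph V) (c : Sym2 V → C) (φ : G ≃g G) : Prop :=
  ∀ u v : V, G.Adj u v → c s(φ u, φ v) = c s(u, v)

/-- An edge colouring `c` breaks an automorphism `φ` if it does not preserve it. -/
def Breaks {V C : Type*} (G : SimpleGraph V) (c : Sym2 V → C) (φ : G ≃g G) : Prop :=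
  ¬ Preserves G c φ

/-- An automorphism is small if it moves some vertex to a neighbour. -/
def IsSmall {V : Type*} (G : SimpleGraph V) (φ : G ≃g G) : Prop :=
  ∃ v : V, G.Adj v (φ v)

/-!
A colouring with two colours is given by its graph of red edges. A greedy proper colouring by
ordinals is determined by the parities of the colours together with, for adjacent vertices of
different parity, which of the two colours is larger. For a graph `H` with one root in each
component, colour the spheres around the roots greedily; inside them, let the red edges record which
colour is larger, and let a red edge to the preceding sphere record the parity. An automorphism of
`H` that respects the red edges and permutes the roots then moves no vertex to a neighbour. This is
applied to the edges of `G` inside the spheres around a small centre, where the remaining edges of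
`G`, those between different spheres, serve to mark the roots.

If `G` contains a diamond, the centre is one of its triangles, the only place with red triangles.
Roots adjacent to exactly two of its vertices, such as the fourth vertex of the diamond, mark
themselves by a red edge to one of these two, chosen so that the triangle is fixed pointwise.

If `G` is diamond-free, the centre is a vertex `r`, coloured so that it can only be fixed or move to
a neighbour. It remains to choose `r` and the roots so that no neighbour looks like `r`. All
vertices in the second sphere adjacent to such a neighbour are roots. If `r` is in a triangle, the
neighbourhood of `r` is a disjoint union of cliques, at most one vertex of each can look like `r`,
and the roots can be chosen not adjacent to these unless their whole component is. If there are no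
triangles and `r` has degree at least three, some choice of roots avoids having exactly one
neighbour that looks like `r`. If all degrees are at most two, then `G` is a path or a cycle.
-/

universe u

namespace SmallIndex

variable {V : Type u}

/-- A permutation of the vertices of `H` that is an automorphism. Automorphisms of several graphs
on the same vertex set are considered at once, hence the unbundled form. -/
def IsAut (H : SimpleGraph V) (φ : Equiv.Perm V) : Prop :=
  ∀ u v, H.Adj (φ u) (φ v) ↔ H.Adj u v

theorem IsAut.symm {H : SimpleGraph V} {φ : Equiv.Perm V} (h : IsAut H φ) : IsAut H φ.symm :=
  fun u v => by rw [← h, φ.apply_symm_apply, φ.apply_symm_apply]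

theorem IsAut.inf {H K : SimpleGraph V} {φ : Equiv.Perm V} (hH : IsAut H φ) (hK : IsAut K φ) :
    IsAut (H ⊓ K) φ :=
  fun u v => and_congr (hH u v) (hK u v)

theorem IsAut.exists_adj_iff {H : SimpleGraph V} {φ : Equiv.Perm V} (h : IsAut H φ)
    {p : V → Prop} (hp : ∀ v, p (φ v) ↔ p v) (v : V) :
    (∃ u, p u ∧ H.Adj (φ v) u) ↔ ∃ u, p u ∧ H.Adj v u := by
  rw [φ.surjective.exists]
  exact exists_congr fun u => and_congr (hp u) (h v u)

theorem IsAut.mem_support_iff {H : SimpleGraph V} {φ : Equiv.Perm V} (hφ : IsAut H φ) (v : V) :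
    φ v ∈ H.support ↔ v ∈ H.support := by
  simpa only [true_and, ← SimpleGraph.mem_support] using
    hφ.exists_adj_iff (p := fun _ => True) (fun _ => Iff.rfl) v

/-- Odd ordinals, those of the form `2 * a + 1`; in particular limit ordinals are not odd. -/
def IsOdd (o : Ordinal.{u}) : Prop :=
  o % 2 = 1

theorem not_isOdd_zero : ¬ IsOdd 0 := by
  rw [IsOdd, Ordinal.zero_mod]
  exact zero_ne_one

theorem isOdd_add_one {o : Ordinal.{u}} : IsOdd (o + 1) ↔ ¬ IsOdd o := by
  have two : (1 : Ordinal.{u}) + 1 = 2 := one_add_one_eq_two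
  have key : (o + 1) % 2 = (o % 2 + 1) % 2 := by
    conv_lhs => rw [← Ordinal.div_add_mod o 2, add_assoc, Ordinal.mul_add_mod_self]
  have hlt : o % 2 < 1 + 1 := (Ordinal.mod_lt o two_ne_zero).trans_eq two.symm
  rw [IsOdd, IsOdd, key]
  rcases (Order.lt_add_one_iff.1 hlt).lt_or_eq with h | h
  · rw [Order.lt_one_iff.1 h, zero_add,
      Ordinal.mod_eq_of_lt (two ▸ lt_add_one (1 : Ordinal.{u}))]
    simp
  · rw [h, two, Ordinal.mod_self]
    simp

theorem isOdd_one : IsOdd 1 := by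
  rw [← zero_add 1, isOdd_add_one]
  exact not_isOdd_zero

theorem not_isOdd_two : ¬ IsOdd 2 := by
  rw [← one_add_one_eq_two, isOdd_add_one, not_not]
  exact isOdd_one

/-! ### Greedy colourings -/

theorem exists_greedy_coloring (H : SimpleGraph V) :
    ∃ f : H.Coloring Ordinal.{u}, ∀ v, ∀ o < f v, ∃ u, H.Adj v u ∧ f u = o := by
  have wf : WellFounded (WellOrderingRel : V → V → Prop) := IsWellFounded.wf
  let f : V → Ordinal.{u} := wf.fix fun v ih =>
    sInf {o | ∀ u (h : WellOrderingRel u v), H.Adj v u → ih u h ≠ o}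
  have hf (v) : f v = sInf {o | ∀ u, WellOrderingRel u v → H.Adj v u → f u ≠ o} := wf.fix_eq _ v
  have hne (v) : {o | ∀ u, WellOrderingRel u v → H.Adj v u → f u ≠ o}.Nonempty := by
    obtain ⟨o, ho⟩ := Ordinal.bddAbove_of_small (s := Set.range f)
    exact ⟨o + 1, fun u _ _ => ((ho ⟨u, rfl⟩).trans_lt (lt_add_one o)).ne⟩
  have earlier {u v} (h : WellOrderingRel u v) (huv : H.Adj v u) : f u ≠ f v := by
    have := csInf_mem (hne v)
    rw [← hf v] at this
    exact this u h huv
  refine ⟨Coloring.mk f fun {u v} huv => ?_, fun v o ho => ?_⟩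
  · rcases trichotomous_of WellOrderingRel u v with h | h | h
    · exact earlier h huv.symm
    · exact absurd h huv.ne
    · exact (earlier h huv).symm
  · by_contra! hcon
    change o < f v at ho
    rw [hf v] at ho
    exact notMem_of_lt_csInf ho (OrderBot.bddBelow _) fun u _ huv => hcon u huv

/-- A proper colouring by ordinals produced by the greedy algorithm: a vertex of colour `o` has
neighbours of all smaller colours. -/
noncomputable def greedyColoring (H : SimpleGraph V) : H.Coloring Ordinal.{u} :=
  (exists_greedy_coloring H).choose

theorem exists_adj_greedyColoring_eq {H : SimpleGraph V} {v : V} {o : Ordinal.{u}}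
    (h : o < greedyColoring H v) : ∃ u, H.Adj v u ∧ greedyColoring H u = o :=
  (exists_greedy_coloring H).choose_spec v o h

/-- The comparison of colours of different parity: an even and an odd colour are joined if the
even one is larger. For colours known up to parity, this determines their order. -/
def orderGraph (f : V → Ordinal.{u}) : SimpleGraph V :=
  fromRel fun u v => ¬ IsOdd (f u) ∧ IsOdd (f v) ∧ f v < f u

section orderGraph

variable {f : V → Ordinal.{u}} {u v w : V}

theorem orderGraph_adj_iff (hu : ¬ IsOdd (f u)) :
    (orderGraph f).Adj u v ↔ IsOdd (f v) ∧ f v < f u := by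
  refine ⟨?_, fun h => ⟨fun huv => hu (huv ▸ h.1), Or.inl ⟨hu, h⟩⟩⟩
  rintro ⟨-, h | h⟩
  · exact h.2
  · exact absurd h.2.1 hu

theorem isOdd_iff_not_of_orderGraph_adj (h : (orderGraph f).Adj u v) :
    IsOdd (f u) ↔ ¬ IsOdd (f v) := by
  obtain ⟨-, ⟨hu, hv, -⟩ | ⟨hv, hu, -⟩⟩ := h
  · exact iff_of_false hu (not_not_intro hv)
  · exact iff_of_true hu hv

theorem not_orderGraph_adj_of_eq_zero (h : f u = 0) : ¬ (orderGraph f).Adj u v := by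
  rintro ⟨-, ⟨-, -, hlt⟩ | ⟨-, hu, -⟩⟩
  · exact not_lt_bot (h ▸ hlt)
  · exact not_isOdd_zero (h ▸ hu)

theorem not_orderGraph_triangle (huv : (orderGraph f).Adj u v) (hvw : (orderGraph f).Adj v w) :
    ¬ (orderGraph f).Adj u w := fun huw => by
  have := isOdd_iff_not_of_orderGraph_adj huv
  have := isOdd_iff_not_of_orderGraph_adj hvw
  have := isOdd_iff_not_of_orderGraph_adj huw
  tauto

end orderGraph

section rigidity

variable {H : SimpleGraph V} {φ : Equiv.Perm V}

/-- In a minimal counterexample, a vertex whose colour drops has, by parity, a neighbour whose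
colour is one more than the new colour, and the order graph forces that neighbour to drop too. -/
theorem greedyColoring_le_apply (hφ : IsAut H φ)
    (hodd : ∀ v, IsOdd (greedyColoring H (φ v)) ↔ IsOdd (greedyColoring H v))
    (hord : IsAut (orderGraph (greedyColoring H) ⊓ H) φ) (v : V) :
    greedyColoring H v ≤ greedyColoring H (φ v) := by
  set f := greedyColoring H with hf
  induction hv : f v using WellFoundedLT.induction generalizing v with | ind o ih =>
  subst hv
  by_contra! hlt
  have hlt' : f (φ v) + 1 < f v := by
    refine lt_of_le_of_ne (Order.add_one_le_of_lt hlt) fun h => ?_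
    have := isOdd_add_one (o := f (φ v))
    rw [h, hodd] at this
    tauto
  obtain ⟨u, hvu, hfu⟩ := exists_adj_greedyColoring_eq hlt'
  rw [← hf] at hfu
  have hodd_u : IsOdd (f u) ↔ ¬ IsOdd (f v) := by rw [hfu, isOdd_add_one, hodd]
  have hφne : f (φ u) ≠ f (φ v) := (f.valid ((hφ v u).2 hvu)).symm
  have hord' : (orderGraph f).Adj (φ v) (φ u) ↔ (orderGraph f).Adj v u := by
    have := hord v u
    rwa [inf_adj, inf_adj, hφ, and_iff_left hvu, and_iff_left hvu] at this
  have hφlt : f (φ u) < f (φ v) := by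
    by_cases hpar : IsOdd (f v)
    · have hu : ¬ IsOdd (f u) := fun h => hodd_u.1 h hpar
      rw [adj_comm _ (φ v), adj_comm _ v, orderGraph_adj_iff hu, and_iff_right hpar,
        orderGraph_adj_iff ((hodd u).not.2 hu), and_iff_right ((hodd v).2 hpar)] at hord'
      exact lt_of_le_of_ne (not_lt.1 fun h => (hord'.1 h).not_gt (hfu ▸ hlt')) hφne
    · have hu := hodd_u.2 hpar
      rw [orderGraph_adj_iff hpar, and_iff_right hu,
        orderGraph_adj_iff ((hodd v).not.2 hpar), and_iff_right ((hodd u).2 hu)] at hord'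
      exact hord'.2 (hfu ▸ hlt')
  refine (ih (f u) (hfu ▸ hlt') u rfl).not_gt ?_
  rw [hfu]
  exact hφlt.trans (lt_add_one _)

theorem greedyColoring_apply (hφ : IsAut H φ)
    (hodd : ∀ v, IsOdd (greedyColoring H (φ v)) ↔ IsOdd (greedyColoring H v))
    (hord : IsAut (orderGraph (greedyColoring H) ⊓ H) φ) (v : V) :
    greedyColoring H (φ v) = greedyColoring H v := by
  refine le_antisymm ?_ (greedyColoring_le_apply hφ hodd hord v)
  have := greedyColoring_le_apply hφ.symm
    (fun v => by rw [← hodd, φ.apply_symm_apply]) hord.symm (φ v)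
  rwa [φ.symm_apply_apply] at this

end rigidity

/-! ### Distance from a set of vertices -/

/-- The set `A` meets every component of `H`, so that distances from `A` are meaningful. -/
def MeetsComponents (H : SimpleGraph V) (A : Set V) : Prop :=
  ∀ v, ∃ a ∈ A, H.Reachable v a

/-- The distance in `H` from `v` to the set `A`; junk value `0` if no vertex of `A` is reachable
from `v`. -/
noncomputable def distFrom (H : SimpleGraph V) (A : Set V) (v : V) : ℕ :=
  sInf {n | ∃ a ∈ A, ∃ p : H.Walk v a, p.length = n}

section distFrom

variable {H : SimpleGraph V} {A : Set V} {u v : V}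

theorem distFrom_le_length {a : V} (ha : a ∈ A) (p : H.Walk v a) : distFrom H A v ≤ p.length :=
  Nat.sInf_le ⟨a, ha, p, rfl⟩

namespace MeetsComponents

theorem exists_walk_length_eq (hA : MeetsComponents H A) (v : V) :
    ∃ a ∈ A, ∃ p : H.Walk v a, p.length = distFrom H A v := by
  obtain ⟨a, ha, ⟨p⟩⟩ := hA v
  exact Nat.sInf_mem (s := {n | ∃ a ∈ A, ∃ p : H.Walk v a, p.length = n}) ⟨p.length, a, ha, p, rfl⟩

theorem distFrom_eq_zero (hA : MeetsComponents H A) : distFrom H A v = 0 ↔ v ∈ A := by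
  refine ⟨fun h => ?_, fun h => Nat.le_zero.1 (distFrom_le_length h (Walk.nil : H.Walk v v))⟩
  obtain ⟨a, ha, p, hp⟩ := hA.exists_walk_length_eq v
  rwa [p.eq_of_length_eq_zero (hp.trans h)]

theorem distFrom_le_add_one (hA : MeetsComponents H A) (h : H.Adj u v) :
    distFrom H A u ≤ distFrom H A v + 1 := by
  obtain ⟨a, ha, p, hp⟩ := hA.exists_walk_length_eq v
  exact hp ▸ distFrom_le_length ha (Walk.cons h p)

theorem distFrom_trichotomy (hA : MeetsComponents H A) (h : H.Adj u v) :
    distFrom H A u = distFrom H A v ∨ distFrom H A u = distFrom H A v + 1 ∨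
      distFrom H A v = distFrom H A u + 1 := by
  have := hA.distFrom_le_add_one h
  have := hA.distFrom_le_add_one h.symm
  omega

theorem exists_adj_distFrom_eq_add_one (hA : MeetsComponents H A) (hv : v ∉ A) :
    ∃ u, H.Adj v u ∧ distFrom H A v = distFrom H A u + 1 := by
  obtain ⟨a, ha, p, hp⟩ := hA.exists_walk_length_eq v
  cases p with
  | nil => exact absurd ha hv
  | @cons _ u _ h q =>
    refine ⟨u, h, (hA.distFrom_le_add_one h).antisymm ?_⟩
    rw [← hp, Walk.length_cons]
    exact Nat.succ_le_succ (distFrom_le_length ha q)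

theorem distFrom_eq_add_one_of_mem (hA : MeetsComponents H A) (hu : u ∉ A) (hv : v ∈ A)
    (h : H.Adj u v) : distFrom H A u = distFrom H A v + 1 := by
  refine (hA.distFrom_le_add_one h).antisymm ?_
  rw [hA.distFrom_eq_zero.2 hv, zero_add, Nat.one_le_iff_ne_zero, Ne, hA.distFrom_eq_zero]
  exact hu

theorem distFrom_apply (hA : MeetsComponents H A) {φ : Equiv.Perm V} (hφ : IsAut H φ)
    (hφA : ∀ v, φ v ∈ A ↔ v ∈ A) (v : V) : distFrom H A (φ v) = distFrom H A v := by
  have le {ψ : Equiv.Perm V} (hψ : IsAut H ψ) (hψA : ∀ v, ψ v ∈ A ↔ v ∈ A) (v : V) :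
      distFrom H A (ψ v) ≤ distFrom H A v := by
    obtain ⟨a, ha, p, hp⟩ := hA.exists_walk_length_eq v
    let g : H →g H := ⟨ψ, fun h => (hψ _ _).2 h⟩
    rw [← hp, ← p.length_map g]
    exact distFrom_le_length ((hψA a).2 ha) (p.map g)
  refine (le hφ hφA v).antisymm ?_
  have := le hφ.symm (fun a => by rw [← hφA, φ.apply_symm_apply]) (φ v)
  rwa [φ.symm_apply_apply] at this

end MeetsComponents

open Classical in
/-- A neighbour of `v` that is closer to `A`, the first step of a shortest path from `v` to `A`;
junk value `v` if there is none. -/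
noncomputable def parent (H : SimpleGraph V) (A : Set V) (v : V) : V :=
  if h : ∃ u, H.Adj v u ∧ distFrom H A v = distFrom H A u + 1 then h.choose else v

theorem MeetsComponents.parent_spec (hA : MeetsComponents H A) (hv : v ∉ A) :
    H.Adj v (parent H A v) ∧ distFrom H A v = distFrom H A (parent H A v) + 1 := by
  have h := hA.exists_adj_distFrom_eq_add_one hv
  rw [parent, dif_pos h]
  exact h.choose_spec

end distFrom

/-! ### Transversals -/

/-- A set containing exactly one vertex of each component of `H`. -/
def IsTransversal (H : SimpleGraph V) (R : Set V) : Prop :=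
  ConnectedComponent.Represents R (Set.univ : Set H.ConnectedComponent)

section IsTransversal

variable {H : SimpleGraph V} {R : Set V} {u v : V}

namespace IsTransversal

theorem meetsComponents (hR : IsTransversal H R) : MeetsComponents H R := fun v => by
  obtain ⟨a, ha, h⟩ := hR.surjOn (Set.mem_univ (H.connectedComponentMk v))
  exact ⟨a, ha, (ConnectedComponent.exact h).symm⟩

theorem eq_of_reachable (hR : IsTransversal H R) (hu : u ∈ R) (hv : v ∈ R)
    (h : H.Reachable u v) : u = v :=
  hR.injOn hu hv (ConnectedComponent.sound h)

theorem swap (hR : IsTransversal H R) (hu : u ∈ R) (h : H.Reachable u v) :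
    IsTransversal H (insert v (R \ {u})) := by
  have huv : H.connectedComponentMk u = H.connectedComponentMk v := ConnectedComponent.sound h
  refine ⟨fun _ _ => trivial, ?_, fun c _ => ?_⟩
  · rintro x (rfl | ⟨hx, hxu⟩) y (rfl | ⟨hy, hyu⟩) hxy
    · rfl
    · exact absurd (hR.injOn hu hy (huv.trans hxy)).symm hyu
    · exact absurd (hR.injOn hx hu (hxy.trans huv.symm)) hxu
    · exact hR.injOn hx hy hxy
  · obtain ⟨x, hx, rfl⟩ := hR.surjOn (Set.mem_univ c)
    by_cases hxu : x = u
    · exact ⟨v, Or.inl rfl, hxu ▸ huv.symm⟩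
    · exact ⟨x, Or.inr ⟨hx, hxu⟩, rfl⟩

theorem not_adj (hR : IsTransversal H R) (hu : u ∈ R) (hv : v ∈ R) : ¬ H.Adj u v :=
  fun h => h.ne (hR.eq_of_reachable hu hv h.reachable)

theorem mem_of_notMem_support (hR : IsTransversal H R) (h : v ∉ H.support) : v ∈ R := by
  obtain ⟨a, ha, ⟨p⟩⟩ := hR.meetsComponents v
  cases p with
  | nil => exact ha
  | cons e _ => exact absurd ⟨_, e⟩ h

theorem distFrom_eq_one (hR : IsTransversal H R) (hu : u ∈ R) (h : H.Adj u v) :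
    distFrom H R v = 1 := by
  rw [hR.meetsComponents.distFrom_eq_add_one_of_mem (fun hv => hR.not_adj hu hv h) hu h.symm,
    hR.meetsComponents.distFrom_eq_zero.2 hu]

theorem adj_of_distFrom_eq_one (hR : IsTransversal H R) (hu : u ∈ R) (h : H.Reachable v u)
    (hv : distFrom H R v = 1) : H.Adj v u := by
  have hvR : v ∉ R := fun hv' => by
    rw [hR.meetsComponents.distFrom_eq_zero.2 hv'] at hv
    exact zero_ne_one hv
  obtain ⟨t, ht, htd⟩ := hR.meetsComponents.exists_adj_distFrom_eq_add_one hvR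
  have htR := hR.meetsComponents.distFrom_eq_zero.1 (show distFrom H R t = 0 by omega)
  rwa [hR.eq_of_reachable hu htR (h.symm.trans ht.reachable)]

end IsTransversal

theorem exists_isTransversal_mem (H : SimpleGraph V) (v : V) : ∃ R, IsTransversal H R ∧ v ∈ R := by
  have hR : IsTransversal H (Quot.out '' Set.univ) := ConnectedComponent.Represents.image_out _
  obtain ⟨a, ha, h⟩ := hR.meetsComponents v
  exact ⟨_, hR.swap ha h.symm, Set.mem_insert ..⟩

end IsTransversal

/-! ### Layered graphs -/

/-- The edges of `G` inside the level sets of `j` over the values in `s`. -/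
def levelGraph (G : SimpleGraph V) (j : V → ℕ) (s : Set ℕ) : SimpleGraph V where
  Adj u v := G.Adj u v ∧ j u = j v ∧ j v ∈ s
  symm := ⟨fun _ _ ⟨h, hj, hs⟩ => ⟨h.symm, hj.symm, hj ▸ hs⟩⟩
  loopless := ⟨fun _ h => h.1.ne rfl⟩

/-- The subgraph of `G` given by `d` inside the level sets of `j`, and by `down` on the edges from
a level to the preceding one. -/
def layered (G : SimpleGraph V) (j : V → ℕ) (d : SimpleGraph V) (down : V → V → Prop) :
    SimpleGraph V :=
  G ⊓ fromRel fun u v => j u = j v ∧ d.Adj u v ∨ j u = j v + 1 ∧ down u v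

section layered

variable {G d : SimpleGraph V} {j : V → ℕ} {s : Set ℕ} {down : V → V → Prop} {u v : V}
  {φ : Equiv.Perm V}

theorem IsAut.levelGraph (hφ : IsAut G φ) (hj : ∀ v, j (φ v) = j v) :
    IsAut (levelGraph G j s) φ := fun u v => by
  simp only [SmallIndex.levelGraph, hφ u v, hj]

theorem layered_le : layered G j d down ≤ G :=
  inf_le_left

theorem layered_adj_of_eq (h : G.Adj u v) (hj : j u = j v) :
    (layered G j d down).Adj u v ↔ d.Adj u v := by
  simp [layered, fromRel_adj, h, h.ne, hj, d.adj_comm v u]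

theorem layered_adj_of_eq_add_one (h : G.Adj u v) (hj : j u = j v + 1) :
    (layered G j d down).Adj u v ↔ down u v := by
  simp [layered, fromRel_adj, h, h.ne, hj, add_assoc]

theorem layered_inf_levelGraph :
    layered G j d down ⊓ levelGraph G j s = d ⊓ levelGraph G j s := by
  ext u v
  exact and_congr_left fun h => layered_adj_of_eq h.1 h.2.1

theorem exists_layered_adj_iff :
    (∃ u, j v = j u + 1 ∧ (layered G j d down).Adj v u) ↔
      ∃ u, j v = j u + 1 ∧ G.Adj v u ∧ down v u :=
  exists_congr fun _ => and_congr_right fun hj =>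
    ⟨fun h => ⟨layered_le h, (layered_adj_of_eq_add_one (layered_le h) hj).1 h⟩,
      fun h => (layered_adj_of_eq_add_one h.1 hj).2 h.2⟩

theorem IsAut.exists_lower_adj_iff (hφ : IsAut d φ) (hj : ∀ v, j (φ v) = j v) (v : V) :
    (∃ u, j (φ v) = j u + 1 ∧ d.Adj (φ v) u) ↔ ∃ u, j v = j u + 1 ∧ d.Adj v u := by
  rw [hj]
  exact hφ.exists_adj_iff (fun u => by rw [hj]) v

end layered

/-! ### Rigid colourings of the components of a graph -/

/-- A greedy colouring inside the levels of the distance from `R`. -/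
noncomputable def levelColoring (H : SimpleGraph V) (R : Set V) :
    (levelGraph H (distFrom H R) Set.univ).Coloring Ordinal.{u} :=
  greedyColoring _

/-- The red graph that makes a graph `H` with transversal `R` rigid: inside the levels of the
distance from `R` it compares greedy colours, and whether a vertex has a red edge to its parent
encodes the parity of its colour. In this encoding, the red edges are at the odd vertices if `b`
is true and at the even ones otherwise. -/
noncomputable def greedyRed (H : SimpleGraph V) (R : Set V) (b : Prop) : SimpleGraph V :=
  layered H (distFrom H R) (orderGraph (levelColoring H R)) fun u v =>
    (IsOdd (levelColoring H R u) ↔ b) ∧ v = parent H R u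

section greedyRed

variable {H : SimpleGraph V} {R : Set V} {u v w : V}

theorem greedyRed_le {b : Prop} : greedyRed H R b ≤ H :=
  layered_le

theorem IsTransversal.levelColoring_eq_zero (hR : IsTransversal H R) (hv : v ∈ R) :
    levelColoring H R v = 0 := by
  by_contra h
  obtain ⟨u, ⟨hu, hj, -⟩, -⟩ := exists_adj_greedyColoring_eq (pos_iff_ne_zero.2 h)
  have hv0 := hR.meetsComponents.distFrom_eq_zero.2 hv
  exact hR.not_adj hv (hR.meetsComponents.distFrom_eq_zero.1 (hj.symm.trans hv0)) hu

theorem IsTransversal.isOdd_levelColoring_iff (hR : IsTransversal H R) (b : Prop) :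
    IsOdd (levelColoring H R v) ↔ v ∉ R ∧
      ((∃ u, distFrom H R v = distFrom H R u + 1 ∧ (greedyRed H R b).Adj v u) ↔ b) := by
  by_cases hv : v ∈ R
  · rw [hR.levelColoring_eq_zero hv]
    exact iff_of_false not_isOdd_zero fun h => h.1 hv
  · obtain ⟨hadj, hj⟩ := hR.meetsComponents.parent_spec hv
    have : (∃ u, distFrom H R v = distFrom H R u + 1 ∧ (greedyRed H R b).Adj v u) ↔
        (IsOdd (levelColoring H R v) ↔ b) := by
      rw [greedyRed, exists_layered_adj_iff]
      exact ⟨fun ⟨_, _, _, h⟩ => h.1, fun h => ⟨_, hj, hadj, h, rfl⟩⟩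
    rw [this]
    tauto

theorem IsTransversal.not_adj_apply (hR : IsTransversal H R) {φ : Equiv.Perm V} (hφ : IsAut H φ)
    {b : Prop} (hred : IsAut (greedyRed H R b) φ) (hφR : ∀ v, φ v ∈ R ↔ v ∈ R) (v : V) :
    ¬ H.Adj v (φ v) := by
  intro hv
  have hj := hR.meetsComponents.distFrom_apply hφ hφR
  have hlevel : IsAut (levelGraph H (distFrom H R) Set.univ) φ := hφ.levelGraph hj
  have hodd (v) : IsOdd (levelColoring H R (φ v)) ↔ IsOdd (levelColoring H R v) := by
    rw [hR.isOdd_levelColoring_iff b, hR.isOdd_levelColoring_iff b, hφR,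
      hred.exists_lower_adj_iff hj]
  have hord := hred.inf hlevel
  rw [greedyRed, layered_inf_levelGraph] at hord
  exact (levelColoring H R).valid ⟨hv, (hj v).symm, trivial⟩
    (greedyColoring_apply hlevel hodd hord v).symm

theorem IsTransversal.not_greedyRed_triangle (hR : IsTransversal H R) {b : Prop}
    (huv : (greedyRed H R b).Adj u v) (hvw : (greedyRed H R b).Adj v w) :
    ¬ (greedyRed H R b).Adj u w := by
  have key {u v w} (huv : (greedyRed H R b).Adj u v) (hvw : (greedyRed H R b).Adj v w)
      (hj : distFrom H R u = distFrom H R v) : ¬ (greedyRed H R b).Adj u w := fun huw => by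
    have hcol := (layered_adj_of_eq (layered_le huv) hj).1 huv
    rcases hR.meetsComponents.distFrom_trichotomy (layered_le hvw) with h | h | h
    · exact not_orderGraph_triangle hcol ((layered_adj_of_eq (layered_le hvw) h).1 hvw)
        ((layered_adj_of_eq (layered_le huw) (hj.trans h)).1 huw)
    · have hv := ((layered_adj_of_eq_add_one (layered_le hvw) h).1 hvw).1
      have hu := ((layered_adj_of_eq_add_one (layered_le huw) (hj.trans h)).1 huw).1
      have := isOdd_iff_not_of_orderGraph_adj hcol
      tauto
    · have hv := ((layered_adj_of_eq_add_one (layered_le hvw).symm h).1 hvw.symm).2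
      have hu := ((layered_adj_of_eq_add_one (layered_le huw).symm (hj ▸ h)).1 huw.symm).2
      exact huv.ne (hu.trans hv.symm)
  intro huw
  have huv' := hR.meetsComponents.distFrom_trichotomy (layered_le huv)
  have hvw' := hR.meetsComponents.distFrom_trichotomy (layered_le hvw)
  have huw' := hR.meetsComponents.distFrom_trichotomy (layered_le huw)
  by_cases h1 : distFrom H R u = distFrom H R v
  · exact key huv hvw h1 huw
  by_cases h2 : distFrom H R v = distFrom H R w
  · exact key hvw huw.symm h2 huv.symm
  · exact key huw hvw.symm (by omega) huv

theorem IsTransversal.greedyRed_adj_of_eq_zero (hR : IsTransversal H R)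
    (hv : levelColoring H R v = 0) (h : (greedyRed H R True).Adj u v) :
    distFrom H R u = distFrom H R v + 1 ∧ v = parent H R u := by
  rcases hR.meetsComponents.distFrom_trichotomy (layered_le h) with hj | hj | hj
  · exact absurd ((layered_adj_of_eq (layered_le h) hj).1 h).symm (not_orderGraph_adj_of_eq_zero hv)
  · exact ⟨hj, ((layered_adj_of_eq_add_one (layered_le h) hj).1 h).2⟩
  · have := ((layered_adj_of_eq_add_one (layered_le h).symm hj).1 h.symm).1.2 trivial
    exact absurd (hv ▸ this) not_isOdd_zero

theorem IsTransversal.greedyRed_adj_iff_of_mem (hR : IsTransversal H R) {b : Prop} (hu : u ∈ R)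
    (h : H.Adj v u) : (greedyRed H R b).Adj v u ↔ (IsOdd (levelColoring H R v) ↔ b) := by
  have hu0 := hR.meetsComponents.distFrom_eq_zero.2 hu
  have hv1 := hR.distFrom_eq_one hu h.symm
  obtain ⟨hadj, hj⟩ := hR.meetsComponents.parent_spec fun hv => hR.not_adj hv hu h
  have hparent : u = parent H R v := hR.eq_of_reachable hu
    (hR.meetsComponents.distFrom_eq_zero.1 (by omega)) (h.symm.reachable.trans hadj.reachable)
  exact (layered_adj_of_eq_add_one h (by omega)).trans (and_iff_left hparent)

theorem IsTransversal.exists_blue_of_red_adj (hR : IsTransversal H R) (hu : u ∈ R)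
    (h : (greedyRed H R True).Adj v u) :
    ∃ w ∉ R, H.Adj v w ∧ H.Adj w u ∧ ¬ (greedyRed H R True).Adj v w ∧
      ∀ t, (greedyRed H R True).Adj v t → ¬ (greedyRed H R True).Adj t w := by
  have hv1 := hR.distFrom_eq_one hu (layered_le h).symm
  have hodd := ((hR.greedyRed_adj_iff_of_mem hu (layered_le h)).1 h).2 trivial
  obtain ⟨w, ⟨hvw, hj, -⟩, hw0⟩ := exists_adj_greedyColoring_eq
    (pos_iff_ne_zero.2 fun h0 => not_isOdd_zero (h0 ▸ hodd))
  have hwR : w ∉ R := fun hw => by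
    have := hR.meetsComponents.distFrom_eq_zero.2 hw
    omega
  refine ⟨w, hwR, hvw, ?_, fun hred => ?_, fun t hvt htw => ?_⟩
  · exact hR.adj_of_distFrom_eq_one hu (hvw.symm.reachable.trans (layered_le h).reachable)
      (by omega)
  · have := (hR.greedyRed_adj_of_eq_zero hw0 hred).1
    omega
  · obtain ⟨ht, hw⟩ := hR.greedyRed_adj_of_eq_zero hw0 htw
    have hv := ((layered_adj_of_eq_add_one (layered_le hvt).symm (by omega)).1 hvt.symm).2
    exact hvw.ne (hv.trans hw.symm)

theorem IsTransversal.exists_eq_zero_of_mem (hR : IsTransversal H R) (hv : v ∈ R)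
    (h : v ∈ H.support) : ∃ w, H.Adj v w ∧ levelColoring H R w = 0 := by
  obtain ⟨u, hu⟩ := h
  by_cases h0 : levelColoring H R u = 0
  · exact ⟨u, hu, h0⟩
  · obtain ⟨w, ⟨huw, hj, -⟩, hw0⟩ := exists_adj_greedyColoring_eq (pos_iff_ne_zero.2 h0)
    exact ⟨w, (hR.adj_of_distFrom_eq_one hv (huw.symm.reachable.trans hu.symm.reachable)
      (hj ▸ hR.distFrom_eq_one hv hu)).symm, hw0⟩

theorem IsTransversal.exists_blue_of_mem (hR : IsTransversal H R) (hv : v ∈ R)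
    (h : v ∈ H.support) :
    ∃ w, H.Adj v w ∧ ¬ (greedyRed H R True).Adj v w ∧
      ∀ t, (greedyRed H R True).Adj v t → ¬ (greedyRed H R True).Adj t w := by
  obtain ⟨w, hvw, hw0⟩ := hR.exists_eq_zero_of_mem hv h
  have hv0 := hR.meetsComponents.distFrom_eq_zero.2 hv
  have hw1 := hR.distFrom_eq_one hv hvw
  refine ⟨w, hvw, fun hred => ?_, fun t hvt htw => ?_⟩
  · have := (hR.greedyRed_adj_of_eq_zero hw0 hred).1
    omega
  · have := (hR.greedyRed_adj_of_eq_zero hw0 htw).1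
    have := hR.distFrom_eq_one hv (layered_le hvt)
    omega

theorem IsTransversal.exists_red_of_mem (hR : IsTransversal H R) (hv : v ∈ R)
    (h : v ∈ H.support) : ∃ w, (greedyRed H R False).Adj v w := by
  obtain ⟨w, hvw, hw0⟩ := hR.exists_eq_zero_of_mem hv h
  exact ⟨w, ((hR.greedyRed_adj_iff_of_mem hv hvw.symm).2
    (iff_of_false (hw0 ▸ not_isOdd_zero) id)).symm⟩

end greedyRed

theorem eq_of_isLowerSet_of_even {S : Set Ordinal.{u}} (hS : IsLowerSet S) {a b : Ordinal.{u}}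
    (ha : a ∈ S) (hb : b ∈ S) (hba : b ≠ a) (heven : ¬ IsOdd a)
    (h : ∀ o ∈ S, o = a ∨ o = b ∨ IsOdd o ∧ o < a) :
    a = 0 ∧ S = {0, 1} ∨ a = 2 ∧ S = {0, 1, 2} := by
  by_cases h0 : a = 0
  · subst h0
    have hb1 : b = 1 := by
      have := h 1 (hS (Order.one_le_iff_pos.2 (pos_iff_ne_zero.2 hba)) hb)
      simpa [eq_comm] using this
    subst hb1
    refine Or.inl ⟨rfl, Set.Subset.antisymm (fun o ho => ?_) (Set.pair_subset ha hb)⟩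
    simpa using h o ho
  · have hb0 : b = 0 := by
      have := h 0 (hS bot_le ha)
      simpa [not_isOdd_zero, Ne.symm h0, eq_comm] using this
    have h2a : 2 ≤ a := by
      have h1 : a ≠ 1 := fun h => heven (h ▸ isOdd_one)
      rw [← one_add_one_eq_two]
      exact Order.add_one_le_of_lt
        (lt_of_le_of_ne (Order.one_le_iff_pos.2 (pos_iff_ne_zero.2 h0)) h1.symm)
    have ha2 : a = 2 := by
      have := h 2 (hS h2a ha)
      simpa [hb0, not_isOdd_two, eq_comm] using this
    subst ha2 hb0
    have h1 : 1 ∈ S := hS one_le_two ha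
    refine Or.inr ⟨rfl, Set.Subset.antisymm (fun o ho => ?_) ?_⟩
    · obtain rfl | rfl | ⟨-, hlt⟩ := h o ho
      · simp
      · simp
      · rw [← one_add_one_eq_two, Order.lt_add_one_iff, Order.le_one_iff] at hlt
        obtain rfl | rfl := hlt <;> simp
    · rintro o (rfl | rfl | rfl)
      exacts [hb, h1, ha]

/-! ### Bad vertices of cluster graphs -/

/-- A disjoint union of complete graphs. -/
def IsCluster (H : SimpleGraph V) : Prop :=
  ∀ ⦃u v w⦄, H.Adj u v → H.Adj v w → u ≠ w → H.Adj u w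

/-- The vertices of a cluster graph `H` that the colouring `greedyRed H R False` does not protect
against exchange with an outer vertex: a root all of whose edges are red, or a non-root with
exactly one blue edge. -/
def IsBad (H : SimpleGraph V) (R : Set V) (v : V) : Prop :=
  (v ∈ R ∧ ∀ u, H.Adj v u → (greedyRed H R False).Adj v u) ∨
    (v ∉ R ∧ ∃! u, H.Adj v u ∧ ¬ (greedyRed H R False).Adj v u)

/-- The set of colours of the vertices outside `R` in the clique of `v`. -/
def palette (H : SimpleGraph V) (R : Set V) (v : V) : Set Ordinal.{u} :=
  levelColoring H R '' (insert v (H.neighborSet v) \ R)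

theorem reachable_of_mem_insert_neighborSet {H : SimpleGraph V} {v w : V}
    (hw : w ∈ insert v (H.neighborSet v)) :
    H.Reachable v w := by
  obtain rfl | hw := hw
  · exact Reachable.refl _
  · exact Adj.reachable hw

namespace IsCluster

variable {H : SimpleGraph V} {R : Set V} {u v w : V}

theorem adj_of_reachable (hH : IsCluster H) (h : H.Reachable u v) (hne : u ≠ v) : H.Adj u v := by
  obtain ⟨p⟩ := h
  induction p with
  | nil => exact absurd rfl hne
  | @cons u w v huw _ ih =>
    by_cases hwv : w = v
    · exact hwv ▸ huw
    · exact hH huw (ih hwv) hne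

theorem insert_neighborSet_subset (hH : IsCluster H) (h : H.Adj u v) :
    insert u (H.neighborSet u) ⊆ insert v (H.neighborSet v) := by
  rintro w (rfl | hw)
  · exact Or.inr h.symm
  · by_cases hwv : w = v
    · exact Or.inl hwv
    · exact Or.inr (hH h.symm hw (Ne.symm hwv))

theorem insert_neighborSet_congr (hH : IsCluster H) (h : H.Adj u v) :
    insert u (H.neighborSet u) = insert v (H.neighborSet v) :=
  (hH.insert_neighborSet_subset h).antisymm (hH.insert_neighborSet_subset h.symm)

theorem palette_congr (hH : IsCluster H) (h : H.Adj u v) : palette H R u = palette H R v := by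
  rw [palette, palette, hH.insert_neighborSet_congr h]

theorem exists_root_adj (hH : IsCluster H) (hR : IsTransversal H R) (hv : v ∉ R) :
    ∃ a ∈ R, H.Adj v a := by
  obtain ⟨a, ha, h⟩ := hR.meetsComponents v
  exact ⟨a, ha, hH.adj_of_reachable h fun h => hv (h ▸ ha)⟩

theorem distFrom_eq_one (hH : IsCluster H) (hR : IsTransversal H R) (hv : v ∉ R) :
    distFrom H R v = 1 := by
  obtain ⟨a, ha, h⟩ := hH.exists_root_adj hR hv
  exact hR.distFrom_eq_one ha h.symm

theorem levelColoring_ne (hH : IsCluster H) (hR : IsTransversal H R) (hu : u ∉ R) (hv : v ∉ R)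
    (h : H.Adj u v) : levelColoring H R u ≠ levelColoring H R v :=
  (levelColoring H R).valid
    ⟨h, (hH.distFrom_eq_one hR hu).trans (hH.distFrom_eq_one hR hv).symm, trivial⟩

theorem exists_adj_of_lt (hR : IsTransversal H R) {o : Ordinal.{u}} (h : o < levelColoring H R v) :
    ∃ u ∉ R, H.Adj v u ∧ levelColoring H R u = o := by
  obtain ⟨u, ⟨hvu, hj, -⟩, rfl⟩ := exists_adj_greedyColoring_eq h
  refine ⟨u, fun hu => ?_, hvu, rfl⟩
  rw [hR.meetsComponents.distFrom_eq_zero.2 hu, hR.meetsComponents.distFrom_eq_zero] at hj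
  exact hR.not_adj hj hu hvu

theorem isLowerSet_palette (hH : IsCluster H) (hR : IsTransversal H R) :
    IsLowerSet (palette H R v) := by
  rintro _ o hle ⟨u, ⟨hu, huR⟩, rfl⟩
  obtain rfl | hlt := hle.eq_or_lt
  · exact ⟨u, ⟨hu, huR⟩, rfl⟩
  · obtain ⟨w, hwR, huw, rfl⟩ := exists_adj_of_lt hR hlt
    refine ⟨w, ⟨?_, hwR⟩, rfl⟩
    obtain rfl | hvu := hu
    · exact Or.inr huw
    · exact hH.insert_neighborSet_subset hvu.symm (Or.inr huw)

theorem greedyRed_adj_iff (hH : IsCluster H) (hR : IsTransversal H R) (hu : u ∉ R) (hv : v ∉ R)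
    (h : H.Adj u v) {b : Prop} :
    (greedyRed H R b).Adj u v ↔ (orderGraph (levelColoring H R)).Adj u v :=
  layered_adj_of_eq h ((hH.distFrom_eq_one hR hu).trans (hH.distFrom_eq_one hR hv).symm)

theorem palette_subset_of_root_red (hH : IsCluster H) (hR : IsTransversal H R) (hv : v ∈ R)
    (hred : ∀ u, H.Adj v u → (greedyRed H R False).Adj v u) : palette H R v ⊆ {0} := by
  have heven : ∀ o ∈ palette H R v, ¬ IsOdd o := by
    rintro _ ⟨u, ⟨rfl | hu, huR⟩, rfl⟩
    · exact absurd hv huR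
    · exact ((hR.greedyRed_adj_iff_of_mem hv hu.symm).1 (hred u hu).symm).1
  intro o ho
  by_contra h0
  refine heven 1 (hH.isLowerSet_palette hR ?_ ho) isOdd_one
  exact Order.one_le_iff_pos.2 (pos_iff_ne_zero.2 h0)

theorem not_isOdd_of_existsUnique_blue (hH : IsCluster H) (hR : IsTransversal H R) (hv : v ∉ R)
    (hblue : ∃! u, H.Adj v u ∧ ¬ (greedyRed H R False).Adj v u) :
    ¬ IsOdd (levelColoring H R v) := fun hodd => by
  obtain ⟨a, ha, hva⟩ := hH.exists_root_adj hR hv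
  obtain ⟨u, huR, hvu, hu⟩ :=
    exists_adj_of_lt hR (pos_iff_ne_zero.2 fun h0 => not_isOdd_zero (h0 ▸ hodd))
  have hau : a = u := hblue.unique
    ⟨hva, fun h => ((hR.greedyRed_adj_iff_of_mem ha hva).1 h).1 hodd⟩
    ⟨hvu, fun h => not_orderGraph_adj_of_eq_zero hu ((hH.greedyRed_adj_iff hR hv huR hvu).1 h).symm⟩
  exact huR (hau ▸ ha)

/-- By parity the blue edge joins `v` to a non-root `x`, and the colours other than those of `v` and
`x` are odd and less than the colour of `v`. -/
theorem palette_eq_of_existsUnique_blue (hH : IsCluster H) (hR : IsTransversal H R) (hv : v ∉ R)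
    (hblue : ∃! u, H.Adj v u ∧ ¬ (greedyRed H R False).Adj v u) :
    levelColoring H R v = 0 ∧ palette H R v = {0, 1} ∨
      levelColoring H R v = 2 ∧ palette H R v = {0, 1, 2} := by
  have heven := hH.not_isOdd_of_existsUnique_blue hR hv hblue
  obtain ⟨x, ⟨hvx, hx⟩, hunique⟩ := hblue
  have hxR : x ∉ R := fun h =>
    hx ((hR.greedyRed_adj_iff_of_mem h hvx).2 (iff_of_false heven id))
  have hother {u} (huR : u ∉ R) (hvu : H.Adj v u) (hux : u ≠ x) :
      IsOdd (levelColoring H R u) ∧ levelColoring H R u < levelColoring H R v := by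
    rw [← orderGraph_adj_iff heven, ← hH.greedyRed_adj_iff hR hv huR hvu (b := False)]
    by_contra h
    exact hux (hunique u ⟨hvu, h⟩)
  have hcases : ∀ o ∈ palette H R v, o = levelColoring H R v ∨ o = levelColoring H R x ∨
      IsOdd o ∧ o < levelColoring H R v := by
    rintro _ ⟨u, ⟨rfl | hvu, huR⟩, rfl⟩
    · exact Or.inl rfl
    · by_cases hux : u = x
      · exact Or.inr (Or.inl (hux ▸ rfl))
      · exact Or.inr (Or.inr (hother huR hvu hux))
  exact eq_of_isLowerSet_of_even (hH.isLowerSet_palette hR) ⟨v, ⟨Or.inl rfl, hv⟩, rfl⟩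
    ⟨x, ⟨Or.inr hvx, hxR⟩, rfl⟩ (hH.levelColoring_ne hR hv hxR hvx).symm heven hcases

theorem palette_of_isBad (hH : IsCluster H) (hR : IsTransversal H R) (hv : IsBad H R v) :
    v ∈ R ∧ palette H R v ⊆ {0} ∨ v ∉ R ∧
      (levelColoring H R v = 0 ∧ palette H R v = {0, 1} ∨
        levelColoring H R v = 2 ∧ palette H R v = {0, 1, 2}) := by
  obtain ⟨hv, hred⟩ | ⟨hv, hblue⟩ := hv
  · exact Or.inl ⟨hv, hH.palette_subset_of_root_red hR hv hred⟩
  · exact Or.inr ⟨hv, hH.palette_eq_of_existsUnique_blue hR hv hblue⟩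

theorem not_adj_of_isBad (hH : IsCluster H) (hR : IsTransversal H R) (hu : IsBad H R u)
    (hv : IsBad H R v) : ¬ H.Adj u v := fun h => by
  have hpal : palette H R u = palette H R v := hH.palette_congr h
  have h12 : ({0, 1, 2} : Set Ordinal.{u}) ≠ {0, 1} := fun h => by
    have : (2 : Ordinal.{u}) ∈ ({0, 1} : Set Ordinal.{u}) := h ▸ by simp
    simp at this
  obtain ⟨huR, hu⟩ | ⟨huR, hu⟩ := hH.palette_of_isBad hR hu <;>
    obtain ⟨hvR, hv⟩ | ⟨hvR, hv⟩ := hH.palette_of_isBad hR hv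
  · exact hR.not_adj huR hvR h
  · have h1 : 1 ∈ palette H R v := by obtain ⟨-, hv⟩ | ⟨-, hv⟩ := hv <;> simp [hv]
    exact one_ne_zero (hu (hpal ▸ h1))
  · have h1 : 1 ∈ palette H R u := by obtain ⟨-, hu⟩ | ⟨-, hu⟩ := hu <;> simp [hu]
    exact one_ne_zero (hv (hpal ▸ h1))
  · have hne := hH.levelColoring_ne hR huR hvR h
    obtain ⟨hu, hSu⟩ | ⟨hu, hSu⟩ := hu <;> obtain ⟨hv, hSv⟩ | ⟨hv, hSv⟩ := hv
    · exact hne (hu.trans hv.symm)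
    · exact h12 (hSv.symm.trans (hpal.symm.trans hSu))
    · exact h12 (hSu.symm.trans (hpal.trans hSv))
    · exact hne (hu.trans hv.symm)

theorem injOn_levelColoring (hH : IsCluster H) (hR : IsTransversal H R) :
    Set.InjOn (levelColoring H R) (insert v (H.neighborSet v) \ R) := by
  rintro x ⟨hx, hxR⟩ y ⟨hy, hyR⟩ hxy
  by_contra hne
  refine hH.levelColoring_ne hR hxR hyR (hH.adj_of_reachable ?_ hne) hxy
  exact (reachable_of_mem_insert_neighborSet hx).symm.trans (reachable_of_mem_insert_neighborSet hy)

theorem encard_le_four_of_isBad (hH : IsCluster H) (hR : IsTransversal H R) (hv : IsBad H R v) :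
    (insert v (H.neighborSet v)).encard ≤ 4 := by
  have hpal : palette H R v ⊆ {0, 1, 2} := by
    obtain ⟨-, h⟩ | ⟨-, ⟨-, h⟩ | ⟨-, h⟩⟩ := hH.palette_of_isBad hR hv
    · exact h.trans (by simp)
    · simp [h, Set.insert_subset_iff]
    · exact h.subset
  have hdiff : (insert v (H.neighborSet v) \ R).encard ≤ 3 := by
    rw [← (hH.injOn_levelColoring hR).encard_image]
    refine (Set.encard_le_encard hpal).trans ((Set.encard_insert_le _ _).trans ?_)
    rw [Set.encard_pair (by simp)]
    norm_num
  have hinter : (insert v (H.neighborSet v) ∩ R).encard ≤ 1 :=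
    Set.encard_le_one_iff.2 fun x y hx hy => hR.eq_of_reachable hx.2 hy.2
      ((reachable_of_mem_insert_neighborSet hx.1).symm.trans
        (reachable_of_mem_insert_neighborSet hy.1))
  rw [← Set.encard_sdiff_add_encard_inter _ R]
  exact (add_le_add hdiff hinter).trans (by norm_num)

end IsCluster

/-- There is a set of red edges, given as a subgraph, such that no automorphism respecting it is
small. -/
def Distinguishable (G : SimpleGraph V) : Prop :=
  ∃ D ≤ G, ∀ φ, IsAut G φ → IsAut D φ → ∀ v, ¬ G.Adj v (φ v)

/-! ### Diamonds -/

/-- The edges of `G` between vertices at the same positive distance from `A`. -/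
noncomputable def outerGraph (G : SimpleGraph V) (A : Set V) : SimpleGraph V :=
  levelGraph G (distFrom G A) (Set.Ici 1)

/-- The red graph built around a triangle `A` with red edges: the rigid colouring `greedyRed`
outside `A`, and for each root `u ∈ R` of the outer graph one red edge, from `u` to `p u`, to the
preceding level. -/
noncomputable def triangleRed (G : SimpleGraph V) (A R : Set V) (p : V → V) : SimpleGraph V :=
  layered G (distFrom G A)
    (levelGraph G (distFrom G A) {0} ⊔ greedyRed (outerGraph G A) R True) fun u v => u ∈ R ∧ v = p u

section triangleRed

variable {G : SimpleGraph V} {A R : Set V} {p : V → V} {u v w : V} {φ : Equiv.Perm V}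

theorem triangleRed_adj_of_mem (hA : MeetsComponents G A) (hu : u ∈ A) (hv : v ∈ A)
    (h : G.Adj u v) : (triangleRed G A R p).Adj u v := by
  have hj := (hA.distFrom_eq_zero.2 hu).trans (hA.distFrom_eq_zero.2 hv).symm
  exact (layered_adj_of_eq h hj).2 (Or.inl ⟨h, hj, hA.distFrom_eq_zero.2 hv⟩)

theorem triangleRed_inf_outerGraph :
    triangleRed G A R p ⊓ outerGraph G A = greedyRed (outerGraph G A) R True := by
  rw [triangleRed, outerGraph, layered_inf_levelGraph, inf_sup_right, inf_eq_left.2 greedyRed_le]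
  refine sup_eq_right.2 fun u v ⟨⟨_, _, h0⟩, ⟨_, _, h1⟩⟩ => ?_
  rw [Set.mem_singleton_iff.1 h0] at h1
  exact absurd h1 (by simp)

theorem outerGraph_adj (hA : MeetsComponents G A) (hu : u ∉ A) (h : G.Adj u v)
    (hj : distFrom G A u = distFrom G A v) : (outerGraph G A).Adj u v :=
  ⟨h, hj, Nat.one_le_iff_ne_zero.2 fun h0 => hu (hA.distFrom_eq_zero.1 (hj.trans h0))⟩

theorem mem_of_triangleRed_triangle (hA : MeetsComponents G A)
    (hR : IsTransversal (outerGraph G A) R) (huv : (triangleRed G A R p).Adj u v)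
    (hvw : (triangleRed G A R p).Adj v w) (huw : (triangleRed G A R p).Adj u w) : u ∈ A := by
  have key {u v w} (huv : (triangleRed G A R p).Adj u v) (hvw : (triangleRed G A R p).Adj v w)
      (huw : (triangleRed G A R p).Adj u w) (hj : distFrom G A u = distFrom G A v) :
      u ∈ A ∧ w ∈ A := by
    rcases hA.distFrom_trichotomy (layered_le hvw) with h | h | h
    · by_contra! hmem
      have hu : u ∉ A := fun hu => hmem hu (hA.distFrom_eq_zero.1
        (by rw [← h, ← hj, hA.distFrom_eq_zero.2 hu]))
      have hv : v ∉ A := fun hv => hu (hA.distFrom_eq_zero.1 (hj.trans (hA.distFrom_eq_zero.2 hv)))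
      have red {x y} (hx : x ∉ A) (hxy : (triangleRed G A R p).Adj x y)
          (hj : distFrom G A x = distFrom G A y) : (greedyRed (outerGraph G A) R True).Adj x y :=
        triangleRed_inf_outerGraph.le ⟨hxy, outerGraph_adj hA hx (layered_le hxy) hj⟩
      exact hR.not_greedyRed_triangle (red hu huv hj) (red hv hvw h) (red hu huw (hj.trans h))
    · have hvR := ((layered_adj_of_eq_add_one (layered_le hvw) h).1 hvw).1
      have huR := ((layered_adj_of_eq_add_one (layered_le huw) (hj.trans h)).1 huw).1
      refine absurd ⟨layered_le huv, hj, ?_⟩ (hR.not_adj huR hvR)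
      exact Set.mem_Ici.2 (by omega)
    · have hv := ((layered_adj_of_eq_add_one (layered_le hvw).symm h).1 hvw.symm).2
      have hu := ((layered_adj_of_eq_add_one (layered_le huw).symm (hj ▸ h)).1 huw.symm).2
      exact absurd (hu.trans hv.symm) huv.ne
  have huv' := hA.distFrom_trichotomy (layered_le huv)
  have hvw' := hA.distFrom_trichotomy (layered_le hvw)
  have huw' := hA.distFrom_trichotomy (layered_le huw)
  by_cases h1 : distFrom G A u = distFrom G A v
  · exact (key huv hvw huw h1).1
  by_cases h2 : distFrom G A v = distFrom G A w
  · exact (key hvw huw.symm huv.symm h2).2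
  · exact (key huw hvw.symm huv (by omega)).1

theorem apply_mem_iff_of_triangleRed (hA : MeetsComponents G A)
    (hR : IsTransversal (outerGraph G A) R)
    (htri : ∀ u ∈ A, ∃ v ∈ A, ∃ w ∈ A, G.Adj u v ∧ G.Adj v w ∧ G.Adj u w)
    (hφ : IsAut (triangleRed G A R p) φ) (v : V) : φ v ∈ A ↔ v ∈ A := by
  have mem {ψ : Equiv.Perm V} (hψ : IsAut (triangleRed G A R p) ψ) {u : V} (hu : u ∈ A) :
      ψ u ∈ A := by
    obtain ⟨v, hv, w, hw, huv, hvw, huw⟩ := htri u hu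
    exact mem_of_triangleRed_triangle hA hR ((hψ _ _).2 (triangleRed_adj_of_mem hA hu hv huv))
      ((hψ _ _).2 (triangleRed_adj_of_mem hA hv hw hvw))
      ((hψ _ _).2 (triangleRed_adj_of_mem hA hu hw huw))
  exact ⟨fun h => by simpa using mem hφ.symm h, mem hφ⟩

theorem mem_iff_of_triangleRed (hA : MeetsComponents G A)
    (hR : IsTransversal (outerGraph G A) R)
    (hp : ∀ u ∉ A, G.Adj u (p u) ∧ distFrom G A u = distFrom G A (p u) + 1) (v : V) :
    v ∈ R ↔ v ∈ A ∨
      ∃ u, distFrom G A v = distFrom G A u + 1 ∧ (triangleRed G A R p).Adj v u := by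
  by_cases hv : v ∈ A
  · refine iff_of_true (hR.mem_of_notMem_support fun ⟨_, _, hj, h⟩ => ?_) (Or.inl hv)
    rw [← hj, hA.distFrom_eq_zero.2 hv] at h
    exact absurd h (by simp)
  · rw [or_iff_right hv, triangleRed, exists_layered_adj_iff]
    exact ⟨fun h => ⟨p v, (hp v hv).2, (hp v hv).1, h, rfl⟩, fun ⟨_, _, _, h⟩ => h.1⟩

theorem not_adj_apply_of_triangleRed (hA : MeetsComponents G A)
    (hR : IsTransversal (outerGraph G A) R)
    (hp : ∀ u ∉ A, G.Adj u (p u) ∧ distFrom G A u = distFrom G A (p u) + 1) (hφ : IsAut G φ)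
    (hred : IsAut (triangleRed G A R p) φ) (hφA : ∀ v, φ v ∈ A ↔ v ∈ A)
    (hfix : ∀ v ∈ A, φ v = v) (v : V) : ¬ G.Adj v (φ v) := fun hv => by
  have hj := hA.distFrom_apply hφ hφA
  have houter : IsAut (outerGraph G A) φ := hφ.levelGraph hj
  have hφR (v) : φ v ∈ R ↔ v ∈ R := by
    rw [mem_iff_of_triangleRed hA hR hp, mem_iff_of_triangleRed hA hR hp, hφA,
      hred.exists_lower_adj_iff hj]
  have hvA : v ∉ A := fun h => hv.ne (hfix v h).symm
  exact hR.not_adj_apply houter (triangleRed_inf_outerGraph ▸ hred.inf houter) hφR v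
    (outerGraph_adj hA hvA hv (hj v).symm)

/-- The vertex `u` outside `A` is adjacent to all vertices of `A` but `m`. -/
def Misses (G : SimpleGraph V) (A : Set V) (u m : V) : Prop :=
  u ∉ A ∧ ∀ v ∈ A, G.Adj u v ↔ v ≠ m

theorem misses_apply_iff (hφ : IsAut G φ) (hφA : ∀ v, φ v ∈ A ↔ v ∈ A) {u m : V} :
    Misses G A (φ u) (φ m) ↔ Misses G A u m := by
  rw [Misses, φ.surjective.forall, hφA]
  simp only [hφA, hφ u, φ.injective.ne_iff, Misses]

/-- The relation `E` stands for a digraph on `a`, `b` and `c` with edges among `a → b`, `b → a` and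
`c → a`, apart from loops. -/
theorem eq_of_rigid_digraph {a b c : V} (hab : a ≠ b) (hac : a ≠ c) (hbc : b ≠ c)
    {E : V → V → Prop} (hE : ∀ u v, E (φ u) (φ v) ↔ E u v)
    (hφ : ∀ v ∈ ({a, b, c} : Set V), φ v ∈ ({a, b, c} : Set V))
    (h1 : E a b) (h2 : ∀ u ∈ ({a, b, c} : Set V), ¬ E u c) (h3 : ¬ E c b) (h4 : E b a → E c a) :
    ∀ v ∈ ({a, b, c} : Set V), φ v = v := by
  simp only [Set.mem_insert_iff, Set.mem_singleton_iff, forall_eq_or_imp, forall_eq] at hφ h2 ⊢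
  have hEab := (hE a b).2 h1
  have hEca := hE c a
  have := φ.injective.ne hab
  have := φ.injective.ne hac
  have := φ.injective.ne hbc
  grind

open Classical in
/-- The first neighbour of `u` in the list `a`, `b`, `c`, or its parent if there is none. -/
noncomputable def firstNeighbor (G : SimpleGraph V) (a b c u : V) : V :=
  if G.Adj u a then a else if G.Adj u b then b else if G.Adj u c then c else parent G {a, b, c} u

theorem firstNeighbor_spec {a b c : V} (hA : MeetsComponents G {a, b, c})
    (hu : u ∉ ({a, b, c} : Set V)) : G.Adj u (firstNeighbor G a b c u) ∧
      distFrom G {a, b, c} u = distFrom G {a, b, c} (firstNeighbor G a b c u) + 1 := by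
  have key {v} (hv : v ∈ ({a, b, c} : Set V)) (h : G.Adj u v) :
      G.Adj u v ∧ distFrom G {a, b, c} u = distFrom G {a, b, c} v + 1 :=
    ⟨h, hA.distFrom_eq_add_one_of_mem hu hv h⟩
  rw [firstNeighbor]
  split_ifs with h1 h2 h3
  · exact key (by simp) h1
  · exact key (by simp) h2
  · exact key (by simp) h3
  · exact hA.parent_spec hu

theorem firstNeighbor_of_misses {a b c : V} (hA : {a, b, c} = A) (hab : a ≠ b) (hac : a ≠ c) :
    (Misses G A u a → firstNeighbor G a b c u = b) ∧
      (Misses G A u b → firstNeighbor G a b c u = a) ∧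
        (Misses G A u c → firstNeighbor G a b c u = a) := by
  have ha : a ∈ A := hA ▸ by simp
  have hb : b ∈ A := hA ▸ by simp
  refine ⟨fun h => ?_, fun h => ?_, fun h => ?_⟩
  · simp [firstNeighbor, h.2 a ha, h.2 b hb, hab.symm]
  · simp [firstNeighbor, h.2 a ha, hab]
  · simp [firstNeighbor, h.2 a ha, hac]

/-- The digraph on the triangle `A` recorded by the red edges to it from roots adjacent to exactly
two of its vertices: such an edge `u v` gives an edge to `v` from the vertex missed by `u`. -/
def MissArrow (G : SimpleGraph V) (A R : Set V) (p : V → V) (m v : V) : Prop :=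
  ∃ u, Misses G A u m ∧ (triangleRed G A R p).Adj u v

theorem missArrow_apply_iff (hφ : IsAut G φ) (hred : IsAut (triangleRed G A R p) φ)
    (hφA : ∀ v, φ v ∈ A ↔ v ∈ A) (m v : V) :
    MissArrow G A R p (φ m) (φ v) ↔ MissArrow G A R p m v := by
  rw [MissArrow, φ.surjective.exists]
  simp only [misses_apply_iff hφ hφA, hred _ v, MissArrow]

theorem missArrow_iff (hA : MeetsComponents G A) (hp : ∀ u ∉ A, G.Adj u (p u)) {m : V}
    (hv : v ∈ A) : MissArrow G A R p m v ↔ ∃ u ∈ R, Misses G A u m ∧ v = p u := by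
  refine exists_congr fun u => ?_
  rw [and_left_comm]
  refine and_congr_right fun hu => ⟨fun h => ?_, fun h => ?_⟩
  · have hj := hA.distFrom_eq_add_one_of_mem hu.1 hv (layered_le h)
    exact (layered_adj_of_eq_add_one (layered_le h) hj).1 h
  · have huv : G.Adj u v := h.2 ▸ hp u hu.1
    exact (layered_adj_of_eq_add_one huv (hA.distFrom_eq_add_one_of_mem hu.1 hv huv)).2 h

theorem distinguishable_of_triangle_misses {a b c : V} (hAabc : {a, b, c} = A)
    (hA : MeetsComponents G A) (hab : G.Adj a b) (hac : G.Adj a c) (hbc : G.Adj b c)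
    (hR : IsTransversal (outerGraph G A) R) (ha : ∃ u ∈ R, Misses G A u a)
    (hb : (∃ u ∈ R, Misses G A u b) → ∃ u ∈ R, Misses G A u c) : Distinguishable G := by
  have haA : a ∈ A := hAabc ▸ by simp
  have hbA : b ∈ A := hAabc ▸ by simp
  have hcA : c ∈ A := hAabc ▸ by simp
  have hp (u) (hu : u ∉ A) := hAabc ▸ firstNeighbor_spec (hAabc ▸ hA) (hAabc ▸ hu)
  have harrow {m v} (hv : v ∈ A) := missArrow_iff (R := R) (m := m) hA (fun u hu => (hp u hu).1) hv
  have hfirst (u) := firstNeighbor_of_misses (G := G) (u := u) hAabc hab.ne hac.ne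
  refine ⟨triangleRed G A R (firstNeighbor G a b c), layered_le, fun φ hφ hred => ?_⟩
  have htri : ∀ u ∈ A, ∃ v ∈ A, ∃ w ∈ A, G.Adj u v ∧ G.Adj v w ∧ G.Adj u w := by
    rw [← hAabc]
    rintro u (rfl | rfl | rfl)
    exacts [⟨b, by simp, c, by simp, hab, hbc, hac⟩, ⟨a, by simp, c, by simp, hab.symm, hac, hbc⟩,
      ⟨a, by simp, b, by simp, hac.symm, hab, hbc.symm⟩]
  have hφA := apply_mem_iff_of_triangleRed hA hR htri hred
  refine not_adj_apply_of_triangleRed hA hR hp hφ hred hφA (hAabc ▸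
    eq_of_rigid_digraph hab.ne hac.ne hbc.ne (missArrow_apply_iff hφ hred hφA)
      (hAabc ▸ fun v => (hφA v).2) ?_ ?_ ?_ ?_)
  · obtain ⟨u, hu, hua⟩ := ha
    exact (harrow hbA).2 ⟨u, hu, hua, ((hfirst u).1 hua).symm⟩
  · rintro m hm h
    obtain ⟨u, -, hu, hcu⟩ := (harrow hcA).1 h
    obtain rfl | rfl | rfl := hm
    · exact hbc.ne' (hcu.trans ((hfirst u).1 hu))
    · exact hac.ne' (hcu.trans ((hfirst u).2.1 hu))
    · exact hac.ne' (hcu.trans ((hfirst u).2.2 hu))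
  · intro h
    obtain ⟨u, -, hu, hbu⟩ := (harrow hbA).1 h
    exact hab.ne' (hbu.trans ((hfirst u).2.2 hu))
  · intro h
    obtain ⟨u, hu, hub, -⟩ := (harrow haA).1 h
    obtain ⟨u, hu, huc⟩ := hb ⟨u, hu, hub⟩
    exact (harrow haA).2 ⟨u, hu, huc, ((hfirst u).2.2 huc).symm⟩

theorem distinguishable_of_diamond {x y z w : V} (hG : G.Connected) (hxy : G.Adj x y)
    (hxz : G.Adj x z) (hyz : G.Adj y z) (hwx : G.Adj w x) (hwy : G.Adj w y) (hwz : w ≠ z)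
    (hnwz : ¬ G.Adj w z) : Distinguishable G := by
  have hA : MeetsComponents G {x, y, z} := fun v => ⟨x, by simp, hG.preconnected v x⟩
  obtain ⟨R, hR, hwR⟩ := exists_isTransversal_mem (outerGraph G {x, y, z}) w
  have hw : Misses G {x, y, z} w z := by
    refine ⟨by simp [hwx.ne, hwy.ne, hwz], ?_⟩
    simp [hwx, hwy, hnwz, hxz.ne, hyz.ne]
  by_cases hx : ∃ u ∈ R, Misses G {x, y, z} u x
  · exact distinguishable_of_triangle_misses rfl hA hxy hxz hyz hR hx fun _ => ⟨w, hwR, hw⟩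
  · have hperm : ({z, x, y} : Set V) = {x, y, z} := by
      rw [Set.pair_comm y z, Set.insert_comm]
    exact distinguishable_of_triangle_misses hperm hA hxz.symm hyz.symm hxy hR ⟨w, hwR, hw⟩
      fun h => absurd h hx

end triangleRed

/-! ### Colourings around a vertex -/

/-- The edges of `G` between neighbours of `r`. -/
noncomputable def linkGraph (G : SimpleGraph V) (r : V) : SimpleGraph V :=
  levelGraph G (distFrom G {r}) {1}

/-- The edges of `G` between vertices at the same distance, at least two, from `r`. -/
noncomputable def farGraph (G : SimpleGraph V) (r : V) : SimpleGraph V :=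
  levelGraph G (distFrom G {r}) (Set.Ici 2)

/-- The red graph built around `r`: rigid colourings of the link of `r` and of the spheres of larger
radius, the transversal `R₁` being marked by the blue edges from `r` and `R₂` by red edges to
parents. A vertex of `R₁` or `R₂` that is isolated in its sphere needs no mark. -/
noncomputable def centeredRed (G : SimpleGraph V) (r : V) (R₁ R₂ : Set V) : SimpleGraph V :=
  layered G (distFrom G {r}) (greedyRed (linkGraph G r) R₁ False ⊔ greedyRed (farGraph G r) R₂ True)
    fun u v => distFrom G {r} u = 1 ∧ ¬ (u ∈ R₁ ∧ u ∈ (linkGraph G r).support) ∨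
      2 ≤ distFrom G {r} u ∧ (u ∈ R₂ ∧ u ∈ (farGraph G r).support) ∧ v = parent G {r} u

/-- Every blue edge at `v` is closed to a triangle by two red edges. -/
def IsClosedAt (G D : SimpleGraph V) (v : V) : Prop :=
  ∀ ⦃b⦄, G.Adj v b → ¬ D.Adj v b → ∃ s, D.Adj v s ∧ D.Adj s b

/-- Properties of the centre `r` of `centeredRed G r R₁ R₂` that are expressed in terms of `G` and
the red graph `D` alone. -/
structure IsCentre (G D : SimpleGraph V) (v : V) : Prop where
  closed : IsClosedAt G D v
  blue_not_adj ⦃b b'⦄ : G.Adj v b → ¬ D.Adj v b → G.Adj v b' → ¬ D.Adj v b' → ¬ G.Adj b b'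
  exists_blue ⦃s t⦄ : D.Adj v s → D.Adj v t → G.Adj s t → ∃ b, G.Adj v b ∧ ¬ D.Adj v b ∧ G.Adj b s

theorem IsClosedAt.apply {G D : SimpleGraph V} {φ : Equiv.Perm V} (hφ : IsAut G φ) (hD : IsAut D φ)
    {v : V} (h : IsClosedAt G D v) : IsClosedAt G D (φ v) :=
  φ.surjective.forall.2 fun b => by
    rw [hφ, hD, φ.surjective.exists]
    simpa only [hD _ _] using @h b

theorem IsCentre.apply {G D : SimpleGraph V} {φ : Equiv.Perm V} (hφ : IsAut G φ) (hD : IsAut D φ)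
    {v : V} (h : IsCentre G D v) : IsCentre G D (φ v) where
  closed := h.closed.apply hφ hD
  blue_not_adj := φ.surjective.forall₂.2 fun b b' => by
    simpa only [hφ _ _, hD _ _] using @h.blue_not_adj b b'
  exists_blue := φ.surjective.forall₂.2 fun s t => by
    rw [φ.surjective.exists]
    simpa only [hφ _ _, hD _ _] using @h.exists_blue s t

section centeredRed

variable {G : SimpleGraph V} {r : V} {R₁ R₂ : Set V} {u v w : V} {φ : Equiv.Perm V}

theorem meetsComponents_singleton (hG : G.Connected) (r : V) : MeetsComponents G {r} :=
  fun v => ⟨r, rfl, hG.preconnected v r⟩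

theorem distFrom_singleton_eq_one (hG : G.Connected) : distFrom G {r} v = 1 ↔ G.Adj r v := by
  have hr := meetsComponents_singleton hG r
  refine ⟨fun h => ?_, fun h => ?_⟩
  · obtain ⟨u, hu, hj⟩ := hr.exists_adj_distFrom_eq_add_one (v := v) fun hv => by
      rw [hr.distFrom_eq_zero.2 hv] at h
      exact zero_ne_one h
    have hur : u = r := hr.distFrom_eq_zero.1 (by omega)
    exact hur ▸ hu.symm
  · rw [hr.distFrom_eq_add_one_of_mem h.ne' rfl h.symm, hr.distFrom_eq_zero.2 rfl]

theorem distFrom_singleton_eq_zero (hG : G.Connected) : distFrom G {r} v = 0 ↔ v = r :=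
  (meetsComponents_singleton hG r).distFrom_eq_zero

theorem parent_singleton_spec (hG : G.Connected) (hv : distFrom G {r} v ≠ 0) :
    G.Adj v (parent G {r} v) ∧ distFrom G {r} v = distFrom G {r} (parent G {r} v) + 1 :=
  (meetsComponents_singleton hG r).parent_spec fun h => hv ((distFrom_singleton_eq_zero hG).2 h)

theorem linkGraph_adj (hG : G.Connected) :
    (linkGraph G r).Adj u v ↔ G.Adj u v ∧ G.Adj r u ∧ G.Adj r v := by
  rw [← distFrom_singleton_eq_one (r := r) (v := u) hG,
    ← distFrom_singleton_eq_one (r := r) (v := v) hG]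
  exact and_congr_right fun _ =>
    ⟨fun h => ⟨h.1.trans h.2, h.2⟩, fun h => ⟨h.1.trans h.2.symm, h.2⟩⟩

theorem centeredRed_inf_linkGraph :
    centeredRed G r R₁ R₂ ⊓ linkGraph G r = greedyRed (linkGraph G r) R₁ False := by
  rw [centeredRed, linkGraph, layered_inf_levelGraph, inf_sup_right, inf_eq_left.2 greedyRed_le]
  refine sup_eq_left.2 fun u v ⟨h2, _, _, h1⟩ => ?_
  have hv : 2 ≤ distFrom G {r} v := (greedyRed_le h2).2.2
  rw [Set.mem_singleton_iff.1 h1] at hv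
  omega

theorem centeredRed_inf_farGraph :
    centeredRed G r R₁ R₂ ⊓ farGraph G r = greedyRed (farGraph G r) R₂ True := by
  rw [centeredRed, farGraph, layered_inf_levelGraph, inf_sup_right, inf_eq_left.2 greedyRed_le]
  refine sup_eq_right.2 fun u v ⟨h1, _, _, h2⟩ => ?_
  have hv : distFrom G {r} v = 1 := (greedyRed_le h1).2.2
  rw [Set.mem_Ici, hv] at h2
  omega

theorem centeredRed_adj_iff_of_link (h : (linkGraph G r).Adj u v) :
    (centeredRed G r R₁ R₂).Adj u v ↔ (greedyRed (linkGraph G r) R₁ False).Adj u v := by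
  rw [← centeredRed_inf_linkGraph, inf_adj, and_iff_left h]

theorem centeredRed_adj_iff_of_far (h : (farGraph G r).Adj u v) :
    (centeredRed G r R₁ R₂).Adj u v ↔ (greedyRed (farGraph G r) R₂ True).Adj u v := by
  rw [← centeredRed_inf_farGraph, inf_adj, and_iff_left h]

theorem centeredRed_adj_center (hG : G.Connected) (h : G.Adj r v) :
    (centeredRed G r R₁ R₂).Adj r v ↔ ¬ (v ∈ R₁ ∧ v ∈ (linkGraph G r).support) := by
  have h0 := (distFrom_singleton_eq_zero hG).2 (Eq.refl r)
  have h1 := (distFrom_singleton_eq_one hG).2 h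
  rw [adj_comm, centeredRed, layered_adj_of_eq_add_one h.symm (by omega), h1]
  simp

theorem centeredRed_adj_lower (h : G.Adj u v) (hj : distFrom G {r} u = distFrom G {r} v + 1)
    (hu : 2 ≤ distFrom G {r} u) : (centeredRed G r R₁ R₂).Adj u v ↔
      (u ∈ R₂ ∧ u ∈ (farGraph G r).support) ∧ v = parent G {r} u := by
  rw [centeredRed, layered_adj_of_eq_add_one h hj]
  have : distFrom G {r} u ≠ 1 := by omega
  tauto

theorem mem_iff_of_centeredRed_link (hG : G.Connected) (hR₁ : IsTransversal (linkGraph G r) R₁)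
    (v : V) : v ∈ R₁ ↔ (v ∈ (linkGraph G r).support → ¬ (centeredRed G r R₁ R₂).Adj r v) := by
  by_cases hv : v ∈ (linkGraph G r).support
  · obtain ⟨u, hu⟩ := (mem_support _).1 hv
    rw [centeredRed_adj_center hG ((linkGraph_adj hG).1 hu).2.1]
    tauto
  · exact iff_of_true (hR₁.mem_of_notMem_support hv) fun h => absurd h hv

theorem mem_iff_of_centeredRed_far (hG : G.Connected) (hR₂ : IsTransversal (farGraph G r) R₂)
    (v : V) : v ∈ R₂ ↔ (v ∈ (farGraph G r).support → ∃ u, distFrom G {r} v = distFrom G {r} u + 1 ∧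
      (centeredRed G r R₁ R₂).Adj v u) := by
  by_cases hv : v ∈ (farGraph G r).support
  · obtain ⟨u, hu⟩ := (mem_support _).1 hv
    have h2 : 2 ≤ distFrom G {r} v := hu.symm.2.2
    refine ⟨fun h _ => ?_, fun h => ?_⟩
    · obtain ⟨hp, hj⟩ := parent_singleton_spec hG (v := v) (r := r) (by omega)
      exact ⟨_, hj, (centeredRed_adj_lower hp hj h2).2 ⟨⟨h, hv⟩, rfl⟩⟩
    · obtain ⟨w, hj, hw⟩ := h hv
      exact ((centeredRed_adj_lower (layered_le hw) hj h2).1 hw).1.1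
  · exact iff_of_true (hR₂.mem_of_notMem_support hv) fun h => absurd h hv

theorem not_adj_apply_of_centeredRed (hG : G.Connected) (hR₁ : IsTransversal (linkGraph G r) R₁)
    (hR₂ : IsTransversal (farGraph G r) R₂) (hφ : IsAut G φ)
    (hred : IsAut (centeredRed G r R₁ R₂) φ) (hr : φ r = r) (v : V) : ¬ G.Adj v (φ v) := by
  have hj := (meetsComponents_singleton hG r).distFrom_apply hφ fun v => by
    rw [Set.mem_singleton_iff, Set.mem_singleton_iff, ← φ.apply_eq_iff_eq (x := v) (y := r), hr]
  have hlink : IsAut (linkGraph G r) φ := hφ.levelGraph hj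
  have hfar : IsAut (farGraph G r) φ := hφ.levelGraph hj
  have hφR₁ (v) : φ v ∈ R₁ ↔ v ∈ R₁ := by
    have : (centeredRed G r R₁ R₂).Adj r (φ v) ↔ (centeredRed G r R₁ R₂).Adj r v := by
      rw [← hred r v, hr]
    rw [mem_iff_of_centeredRed_link hG hR₁ (R₂ := R₂),
      mem_iff_of_centeredRed_link hG hR₁ (R₂ := R₂), hlink.mem_support_iff, this]
  have hφR₂ (v) : φ v ∈ R₂ ↔ v ∈ R₂ := by
    rw [mem_iff_of_centeredRed_far hG hR₂ (R₁ := R₁),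
      mem_iff_of_centeredRed_far hG hR₂ (R₁ := R₁),
      hfar.mem_support_iff, hred.exists_lower_adj_iff hj]
  intro hv
  rcases Nat.lt_trichotomy (distFrom G {r} v) 1 with h | h | h
  · rw [(distFrom_singleton_eq_zero hG).1 (Nat.lt_one_iff.1 h), hr] at hv
    exact hv.ne rfl
  · exact hR₁.not_adj_apply hlink (centeredRed_inf_linkGraph ▸ hred.inf hlink) hφR₁ v
      ⟨hv, (hj v).symm, (hj v).trans h⟩
  · exact hR₂.not_adj_apply hfar (centeredRed_inf_farGraph ▸ hred.inf hfar) hφR₂ v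
      ⟨hv, (hj v).symm, (hj v).symm ▸ h⟩

theorem not_isClosedAt_of_blue (hG : G.Connected) (hvw : (farGraph G r).Adj v w)
    (hblue : ¬ (greedyRed (farGraph G r) R₂ True).Adj v w)
    (hopen : ∀ t, (greedyRed (farGraph G r) R₂ True).Adj v t →
      ¬ (greedyRed (farGraph G r) R₂ True).Adj t w)
    (hlower : v ∉ R₂ ∨ w ∉ R₂) : ¬ IsClosedAt G (centeredRed G r R₁ R₂) v := fun hclosed => by
  obtain ⟨s, hvs, hsw⟩ := hclosed hvw.1 ((centeredRed_adj_iff_of_far hvw).not.2 hblue)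
  have hw : 2 ≤ distFrom G {r} w := hvw.2.2
  have hvwj := hvw.2.1
  rcases (meetsComponents_singleton hG r).distFrom_trichotomy (layered_le hvs) with h | h | h
  · have hvs' : (farGraph G r).Adj v s := ⟨layered_le hvs, h, h ▸ hvwj ▸ hw⟩
    have hsw' : (farGraph G r).Adj s w := ⟨layered_le hsw, h.symm.trans hvwj, hw⟩
    exact hopen s ((centeredRed_adj_iff_of_far hvs').1 hvs)
      ((centeredRed_adj_iff_of_far hsw').1 hsw)
  · have hv := ((centeredRed_adj_lower (layered_le hvs) h (by omega)).1 hvs).1.1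
    have hw := ((centeredRed_adj_lower (layered_le hsw).symm (by omega) hw).1 hsw.symm).1.1
    exact hlower.elim (fun h => h hv) fun h => h hw
  · have hv := ((centeredRed_adj_lower (layered_le hvs).symm h (by omega)).1 hvs.symm).2
    have hw := ((centeredRed_adj_lower (layered_le hsw) (by omega) (by omega)).1 hsw).2
    exact hvw.1.ne (hv.trans hw.symm)

theorem not_isClosedAt (hG : G.Connected) (hR₂ : IsTransversal (farGraph G r) R₂)
    (hv : 2 ≤ distFrom G {r} v) : ¬ IsClosedAt G (centeredRed G r R₁ R₂) v := by
  by_cases hmark : v ∈ R₂ ∧ v ∈ (farGraph G r).support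
  · obtain ⟨w, hvw, hblue, hopen⟩ := hR₂.exists_blue_of_mem hmark.1 hmark.2
    exact not_isClosedAt_of_blue hG hvw hblue hopen (Or.inr fun hw => hR₂.not_adj hmark.1 hw hvw)
  intro hclosed
  obtain ⟨hp, hpj⟩ := parent_singleton_spec hG (v := v) (r := r) (by omega)
  obtain ⟨s, hvs, hsp⟩ := hclosed hp fun h => hmark ((centeredRed_adj_lower hp hpj hv).1 h).1
  have hsj : distFrom G {r} v = distFrom G {r} s := by
    have := (meetsComponents_singleton hG r).distFrom_le_add_one (layered_le hsp)
    rcases (meetsComponents_singleton hG r).distFrom_trichotomy (layered_le hvs) with h | h | h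
    · exact h
    · exact absurd ((centeredRed_adj_lower (layered_le hvs) h hv).1 hvs).1 hmark
    · omega
  have hsR := ((centeredRed_adj_lower (layered_le hsp) (by omega) (by omega)).1 hsp).1.1
  have hvs' : (farGraph G r).Adj v s := ⟨layered_le hvs, hsj, hsj ▸ hv⟩
  obtain ⟨w, -, hvw, -, hblue, hopen⟩ :=
    hR₂.exists_blue_of_red_adj hsR ((centeredRed_adj_iff_of_far hvs').1 hvs)
  exact not_isClosedAt_of_blue hG hvw hblue hopen
    (Or.inl fun h => hmark ⟨h, w, hvw⟩) hclosed

end centeredRed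

/-! ### Diamond-free graphs -/

/-- Two triangles sharing an edge lie in a complete graph on four vertices. -/
def IsDiamondFree (G : SimpleGraph V) : Prop :=
  ∀ ⦃a b c d⦄, G.Adj a b → G.Adj a c → G.Adj b c → G.Adj b d → G.Adj c d → a ≠ d → G.Adj a d

namespace IsDiamondFree

variable {G : SimpleGraph V} {r : V} {R₁ R₂ : Set V} {u v w : V} {φ : Equiv.Perm V}

theorem isCluster_linkGraph (hdf : IsDiamondFree G) (hG : G.Connected) (r : V) :
    IsCluster (linkGraph G r) := fun u v w huv hvw hne => by
  rw [linkGraph_adj hG] at huv hvw ⊢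
  exact ⟨hdf huv.2.1.symm huv.1 huv.2.2 hvw.2.2 hvw.1 hne, huv.2.1, hvw.2.2⟩

theorem isCentre (hdf : IsDiamondFree G) (hG : G.Connected)
    (hR₁ : IsTransversal (linkGraph G r) R₁) : IsCentre G (centeredRed G r R₁ R₂) r := by
  have blue {b} (hb : G.Adj r b) := (centeredRed_adj_center (R₁ := R₁) (R₂ := R₂) hG hb).not_left
  refine ⟨fun b hb hblue => ?_, fun b b' hb hblue hb' hblue' hbb' => ?_, fun s t hs ht hst => ?_⟩
  · obtain ⟨hbR, hbs⟩ := blue hb |>.1 hblue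
    obtain ⟨s, hbs⟩ := hR₁.exists_red_of_mem hbR hbs
    have hbs' := greedyRed_le hbs
    have hrs := ((linkGraph_adj hG).1 hbs').2.2
    exact ⟨s, (centeredRed_adj_center hG hrs).2 fun h => hR₁.not_adj hbR h.1 hbs',
      ((centeredRed_adj_iff_of_link hbs').2 hbs).symm⟩
  · exact hR₁.not_adj ((blue hb).1 hblue).1 ((blue hb').1 hblue').1
      ((linkGraph_adj hG).2 ⟨hbb', hb, hb'⟩)
  · have hst' := (linkGraph_adj hG).2 ⟨hst, layered_le hs, layered_le ht⟩
    have hsR : s ∉ R₁ := fun h =>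
      (centeredRed_adj_center hG (layered_le hs)).1 hs ⟨h, t, hst'⟩
    obtain ⟨a, ha, hsa⟩ := (hdf.isCluster_linkGraph hG r).exists_root_adj hR₁ hsR
    have hra := ((linkGraph_adj hG).1 hsa).2.2
    exact ⟨a, hra, (blue hra).2 ⟨ha, s, hsa.symm⟩, hsa.1.symm⟩

theorem eq_or_adj_apply (hdf : IsDiamondFree G) (hG : G.Connected)
    (hR₁ : IsTransversal (linkGraph G r) R₁) (hR₂ : IsTransversal (farGraph G r) R₂)
    (hφ : IsAut G φ) (hred : IsAut (centeredRed G r R₁ R₂) φ) : φ r = r ∨ G.Adj r (φ r) := by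
  by_contra! h
  refine not_isClosedAt hG hR₂ (v := φ r) ?_ ((hdf.isCentre hG hR₁).apply hφ hred).closed
  have h0 := (distFrom_singleton_eq_zero hG).not.2 h.1
  have h1 := (distFrom_singleton_eq_one hG).not.2 h.2
  omega

theorem distinguishable_of_not_adj_apply (hdf : IsDiamondFree G) (hG : G.Connected)
    (hR₁ : IsTransversal (linkGraph G r) R₁) (hR₂ : IsTransversal (farGraph G r) R₂)
    (h : ∀ φ, IsAut G φ → IsAut (centeredRed G r R₁ R₂) φ → ¬ G.Adj r (φ r)) :
    Distinguishable G :=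
  ⟨centeredRed G r R₁ R₂, layered_le, fun φ hφ hred =>
    not_adj_apply_of_centeredRed hG hR₁ hR₂ hφ hred
      ((hdf.eq_or_adj_apply hG hR₁ hR₂ hφ hred).resolve_right (h φ hφ hred))⟩

theorem isBad_of_isCentre (hdf : IsDiamondFree G) (hG : G.Connected)
    (hv : IsCentre G (centeredRed G r R₁ R₂) v)
    (hsupp : v ∈ (linkGraph G r).support) : IsBad (linkGraph G r) R₁ v := by
  obtain ⟨x, hx⟩ := (mem_support _).1 hsupp
  have hrv := ((linkGraph_adj hG).1 hx).2.1
  have hrv_red := centeredRed_adj_center (R₁ := R₁) (R₂ := R₂) hG hrv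
  rw [adj_comm] at hrv_red
  by_cases hvR : v ∈ R₁
  · refine Or.inl ⟨hvR, fun u hu => ?_⟩
    by_contra hblue
    exact hv.blue_not_adj hrv.symm (fun h => hrv_red.1 h ⟨hvR, hsupp⟩) hu.1
      ((centeredRed_adj_iff_of_link hu).not.2 hblue) ((linkGraph_adj hG).1 hu).2.2
  refine Or.inr ⟨hvR, existsUnique_of_exists_of_unique ?_ fun u u' hu hu' => ?_⟩
  · by_cases hred : (centeredRed G r R₁ R₂).Adj v x
    · obtain ⟨b, hvb, hblue, hbr⟩ :=
        hv.exists_blue (hrv_red.2 fun h => hvR h.1) hred ((linkGraph_adj hG).1 hx).2.2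
      have hvb' := (linkGraph_adj hG).2 ⟨hvb, hrv, hbr.symm⟩
      exact ⟨b, hvb', (centeredRed_adj_iff_of_link hvb').not.1 hblue⟩
    · exact ⟨x, hx, (centeredRed_adj_iff_of_link hx).not.1 hred⟩
  · by_contra hne
    exact hv.blue_not_adj hu.1.1 ((centeredRed_adj_iff_of_link hu.1).not.2 hu.2) hu'.1.1
      ((centeredRed_adj_iff_of_link hu'.1).not.2 hu'.2)
      (hdf.isCluster_linkGraph hG r hu.1.symm hu'.1 hne).1

theorem red_child_of_isCentre (hdf : IsDiamondFree G) (hG : G.Connected)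
    (hR₂ : IsTransversal (farGraph G r) R₂) (hrv : G.Adj r v)
    (hv : IsCentre G (centeredRed G r R₁ R₂) v) (hvw : G.Adj v w) (hw : distFrom G {r} w = 2) :
    (w ∈ R₂ ∧ w ∈ (farGraph G r).support) ∧ v = parent G {r} w := by
  have hvj := (distFrom_singleton_eq_one hG).2 hrv
  have hlower {x} (hvx : G.Adj v x) (hx : distFrom G {r} x = 2) :=
    centeredRed_adj_lower (R₁ := R₁) (R₂ := R₂) hvx.symm (r := r) (by omega) hx.ge
  rw [← hlower hvw hw, adj_comm]
  by_contra hblue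
  have hrw : r ≠ w := fun h => by
    rw [(distFrom_singleton_eq_zero hG).2 h.symm] at hw
    omega
  have hnrw : ¬ G.Adj r w := fun h => by
    rw [(distFrom_singleton_eq_one hG).2 h] at hw
    omega
  obtain ⟨s, hvs, hsw⟩ := hv.closed hvw hblue
  have hvs' := layered_le hvs
  have hsw' := layered_le hsw
  rcases (meetsComponents_singleton hG r).distFrom_trichotomy hvs' with h | h | h
  · exact hnrw (hdf hrv ((distFrom_singleton_eq_one hG).1 (h ▸ hvj)) hvs' hvw hsw' hrw)
  · exact hnrw ((distFrom_singleton_eq_zero (v := s) (r := r) hG).1 (by omega) ▸ hsw')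
  · have hsR := ((hlower hvs' (by omega)).1 hvs.symm).1.1
    have hws : (farGraph G r).Adj w s := ⟨hsw'.symm, by omega, Set.mem_Ici.2 (by omega)⟩
    obtain ⟨x, hxR, hwx, hxs, -⟩ :=
      hR₂.exists_blue_of_red_adj hsR ((centeredRed_adj_iff_of_far hws).1 hsw.symm)
    have hx : distFrom G {r} x = 2 := hwx.2.1 ▸ hw
    have hvx : G.Adj v x := hdf hvw hvs' hws.1 hwx.1 hxs.1.symm fun h => by
      rw [h] at hvj
      omega
    exact hv.blue_not_adj hvw hblue hvx
      (fun h => hxR ((hlower hvx hx).1 h.symm).1.1) hwx.1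

end IsDiamondFree

/-! ### Diamond-free graphs with a triangle -/

theorem forall_of_connected {G : SimpleGraph V} (hG : G.Connected) {p : V → Prop} {r : V}
    (hr : p r) (h : ∀ ⦃u v⦄, p u → G.Adj u v → p v) (v : V) : p v := by
  obtain ⟨w⟩ := hG.preconnected r v
  induction w with
  | nil => exact hr
  | cons e _ ih => exact ih (h hr e)

theorem exists_isTransversal_forall_reachable (H : SimpleGraph V) (p : V → Prop) :
    ∃ R, IsTransversal H R ∧ ∀ w ∈ R, p w → ∀ x, H.Reachable w x → p x := by
  have hex (c : H.ConnectedComponent) : ∃ w, H.connectedComponentMk w = c ∧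
      (p w → ∀ x, H.Reachable w x → p x) := by
    obtain ⟨v, rfl⟩ := c.exists_rep
    by_cases h : ∃ w, H.Reachable w v ∧ ¬ p w
    · obtain ⟨w, hwv, hw⟩ := h
      exact ⟨w, ConnectedComponent.sound hwv, fun h => absurd h hw⟩
    · push Not at h
      exact ⟨v, rfl, fun _ x hx => h x hx.symm⟩
  choose ρ hρ hp using hex
  refine ⟨Set.range ρ, ⟨fun _ _ => trivial, ?_, fun c _ => ⟨ρ c, ⟨c, rfl⟩, hρ c⟩⟩, ?_⟩
  · rintro _ ⟨c, rfl⟩ _ ⟨c', rfl⟩ h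
    rw [hρ, hρ] at h
    rw [h]
  · rintro _ ⟨c, rfl⟩
    exact hp c

theorem IsCluster.eq_of_isBad {H : SimpleGraph V} {R : Set V} {u v : V} (hH : IsCluster H)
    (hR : IsTransversal H R) (hu : IsBad H R u) (hv : IsBad H R v) (h : H.Reachable u v) :
    u = v :=
  not_imp_comm.1 (hH.adj_of_reachable h) (hH.not_adj_of_isBad hR hu hv)

theorem mem_insert_neighborSet_or_distFrom_eq_two {G : SimpleGraph V} {r v a : V} (hG : G.Connected)
    (hrv : G.Adj r v) (hva : G.Adj v a) :
    a ∈ insert r ((linkGraph G r).neighborSet v) ∨ distFrom G {r} a = 2 := by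
  have hv := (distFrom_singleton_eq_one hG).2 hrv
  rcases (meetsComponents_singleton hG r).distFrom_trichotomy hva with h | h | h
  · exact Or.inl (Or.inr ⟨hva, h, h ▸ hv⟩)
  · exact Or.inl (Or.inl ((distFrom_singleton_eq_zero hG).1 (by omega)))
  · exact Or.inr (by omega)

theorem exists_triangle_isClique_imp {G : SimpleGraph V} (hG : G.Connected) {a b c : V}
    (hab : G.Adj a b) (hac : G.Adj a c) (hbc : G.Adj b c) :
    ∃ r s t, G.Adj r s ∧ G.Adj r t ∧ G.Adj s t ∧
      (G.IsClique (G.neighborSet r) → ∀ u, u ≠ r → G.Adj r u) := by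
  by_contra! hno
  have hclique {r s t} (hrs : G.Adj r s) (hrt : G.Adj r t) (hst : G.Adj s t) :
      G.IsClique (G.neighborSet r) := (hno r s t hrs hrt hst).1
  obtain ⟨-, u, hua, hau⟩ := hno a b c hab hac hbc
  suffices h : ∀ u, u = a ∨ G.Adj a u from (h u).elim hua hau
  refine forall_of_connected hG (Or.inl rfl) fun u v hu huv => ?_
  obtain rfl | hu := hu
  · exact Or.inr huv
  obtain ⟨t, hat, hut⟩ : ∃ t, G.Adj a t ∧ G.Adj u t := by
    by_cases hub : u = b
    · exact ⟨c, hac, hub ▸ hbc⟩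
    · exact ⟨b, hab, hclique hab hac hbc hu hab hub⟩
  exact or_iff_not_imp_left.2 fun hva => hclique hu.symm hut hat hu.symm huv (Ne.symm hva)

namespace IsDiamondFree

variable {G : SimpleGraph V} {r s t : V} {R₁ R₂ : Set V} {v w a b : V} {φ : Equiv.Perm V}

theorem isClique_insert_neighborSet_linkGraph (hdf : IsDiamondFree G) (hG : G.Connected) :
    G.IsClique (insert r ((linkGraph G r).neighborSet v)) := by
  rintro a (rfl | ha) b (rfl | hb) hne
  · exact absurd rfl hne
  · exact ((linkGraph_adj hG).1 hb).2.2
  · exact ((linkGraph_adj hG).1 ha).2.2.symm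
  · exact (hdf.isCluster_linkGraph hG r ha.symm hb hne).1

theorem exists_adj_distFrom_eq_two (hdf : IsDiamondFree G) (hG : G.Connected) (hrv : G.Adj r v)
    (hv : ¬ G.IsClique (G.neighborSet v)) : ∃ w, G.Adj v w ∧ distFrom G {r} w = 2 := by
  by_contra! hno
  exact hv (hdf.isClique_insert_neighborSet_linkGraph hG |>.subset fun a ha =>
    (mem_insert_neighborSet_or_distFrom_eq_two hG hrv ha).resolve_right (hno a ha))

theorem not_adj_of_distFrom_eq_two (hdf : IsDiamondFree G) (hG : G.Connected)
    (hR₂ : IsTransversal (farGraph G r) R₂) (hrv : G.Adj r v)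
    (hv : IsCentre G (centeredRed G r R₁ R₂) v) (hva : G.Adj v a) (ha : distFrom G {r} a = 2)
    (hvb : G.Adj v b) (hb : distFrom G {r} b = 2) : ¬ G.Adj a b := fun hab =>
  hR₂.not_adj (hdf.red_child_of_isCentre hG hR₂ hrv hv hva ha).1.1
    (hdf.red_child_of_isCentre hG hR₂ hrv hv hvb hb).1.1 ⟨hab, ha.trans hb.symm, hb.ge⟩

theorem mem_insert_neighborSet_of_triangle (hdf : IsDiamondFree G) (hG : G.Connected)
    (hR₂ : IsTransversal (farGraph G r) R₂) (hrv : G.Adj r v)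
    (hv : IsCentre G (centeredRed G r R₁ R₂) v) (hva : G.Adj v a) (hvb : G.Adj v b)
    (hab : G.Adj a b) : a ∈ insert r ((linkGraph G r).neighborSet v) := by
  refine (mem_insert_neighborSet_or_distFrom_eq_two hG hrv hva).resolve_right fun ha => ?_
  have hra : r ≠ a := fun h => by
    rw [(distFrom_singleton_eq_zero hG).2 h.symm] at ha
    omega
  have hnra : ¬ G.Adj r a := fun h => by
    rw [(distFrom_singleton_eq_one hG).2 h] at ha
    omega
  obtain (rfl | hb) | hb := mem_insert_neighborSet_or_distFrom_eq_two hG hrv hvb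
  · exact hnra hab.symm
  · exact hnra (hdf hrv ((linkGraph_adj hG).1 hb).2.2 hvb hva hab.symm hra)
  · exact hdf.not_adj_of_distFrom_eq_two hG hR₂ hrv hv hva ha hvb hb hab

theorem mem_support_linkGraph_of_triangle (hdf : IsDiamondFree G) (hG : G.Connected)
    (hR₂ : IsTransversal (farGraph G r) R₂) (hrv : G.Adj r v)
    (hv : IsCentre G (centeredRed G r R₁ R₂) v) (hva : G.Adj v a) (hvb : G.Adj v b)
    (hab : G.Adj a b) : v ∈ (linkGraph G r).support := by
  obtain rfl | ha := hdf.mem_insert_neighborSet_of_triangle hG hR₂ hrv hv hva hvb hab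
  · obtain rfl | hb := hdf.mem_insert_neighborSet_of_triangle hG hR₂ hrv hv hvb hva hab.symm
    · exact absurd rfl hab.ne
    · exact ⟨b, hb⟩
  · exact ⟨a, ha⟩

theorem reachable_linkGraph_of_triangle (hdf : IsDiamondFree G) (hG : G.Connected)
    (hR₂ : IsTransversal (farGraph G r) R₂) (hφ : IsAut G φ)
    (hred : IsAut (centeredRed G r R₁ R₂) φ) (hR₁ : IsTransversal (linkGraph G r) R₁)
    (hrφ : G.Adj r (φ r)) (hrs : G.Adj r s) (hrt : G.Adj r t) (hst : G.Adj s t) :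
    (linkGraph G r).Reachable (φ r) s := by
  have hv := (hdf.isCentre hG hR₁).apply hφ hred
  have himage {a b} (ha : G.Adj r a) (hb : G.Adj r b) (hab : G.Adj a b) :
      φ a ∈ insert r ((linkGraph G r).neighborSet (φ r)) :=
    hdf.mem_insert_neighborSet_of_triangle hG hR₂ hrφ hv ((hφ r a).2 ha) ((hφ r b).2 hb)
      ((hφ a b).2 hab)
  obtain ⟨x, hx⟩ := (mem_support _).1 (hdf.mem_support_linkGraph_of_triangle hG hR₂ hrφ hv
    ((hφ r s).2 hrs) ((hφ r t).2 hrt) ((hφ s t).2 hst))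
  by_cases hvs : φ r = s
  · rw [hvs]
  have hadj : G.Adj (φ (φ r)) (φ s) := hdf.isClique_insert_neighborSet_linkGraph hG
    (himage hrφ ((linkGraph_adj hG).1 hx).2.2 hx.1) (himage hrs hrt hst)
    (φ.injective.ne hvs)
  exact ((linkGraph_adj hG).2 ⟨(hφ _ _).1 hadj, hrφ, hrs⟩).reachable

theorem distFrom_ne_two_of_adj (hdf : IsDiamondFree G) (hG : G.Connected)
    (hR₂ : IsTransversal (farGraph G r) R₂) (hrv : G.Adj r v)
    (hv : IsCentre G (centeredRed G r R₁ R₂) v)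
    (hparent : ∀ w ∈ R₂, parent G {r} w = v → ∀ x, (farGraph G r).Reachable w x →
      parent G {r} x = v)
    (hvw : G.Adj v w) : distFrom G {r} w ≠ 2 := fun hw => by
  obtain ⟨⟨hwR, x, hwx⟩, hvp⟩ := hdf.red_child_of_isCentre hG hR₂ hrv hv hvw hw
  have hx : distFrom G {r} x = 2 := hwx.2.1 ▸ hw
  have hxv := (parent_singleton_spec hG (v := x) (r := r) (by omega)).1
  rw [hparent w hwR hvp.symm x hwx.reachable] at hxv
  exact hdf.not_adj_of_distFrom_eq_two hG hR₂ hrv hv hvw hw hxv.symm hx hwx.1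

theorem distinguishable_of_triangle (hdf : IsDiamondFree G) (hG : G.Connected)
    (hcard : 6 ≤ ENat.card V) (hrs : G.Adj r s) (hrt : G.Adj r t) (hst : G.Adj s t)
    (hr : G.IsClique (G.neighborSet r) → ∀ u, u ≠ r → G.Adj r u) : Distinguishable G := by
  have hlink := hdf.isCluster_linkGraph hG r
  obtain ⟨R₁, hR₁, -⟩ := exists_isTransversal_mem (linkGraph G r) r
  obtain ⟨R₂, hR₂, hparent⟩ := exists_isTransversal_forall_reachable (farGraph G r) fun w =>
    IsBad (linkGraph G r) R₁ (parent G {r} w) ∧ (linkGraph G r).Reachable (parent G {r} w) s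
  refine hdf.distinguishable_of_not_adj_apply hG hR₁ hR₂ fun φ hφ hred hrφ => ?_
  have hv := (hdf.isCentre hG hR₁).apply hφ hred
  have hbad : IsBad (linkGraph G r) R₁ (φ r) := hdf.isBad_of_isCentre hG hv <|
    hdf.mem_support_linkGraph_of_triangle hG hR₂ hrφ hv ((hφ r s).2 hrs) ((hφ r t).2 hrt)
      ((hφ s t).2 hst)
  have hvs := hdf.reachable_linkGraph_of_triangle hG hR₂ hφ hred hR₁ hrφ hrs hrt hst
  have hnochild {w} (hw : G.Adj (φ r) w) : distFrom G {r} w ≠ 2 :=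
    hdf.distFrom_ne_two_of_adj hG hR₂ hrφ hv (fun w hwR hw x hx => by
      obtain ⟨hxbad, hxs⟩ := hparent w hwR (hw ▸ ⟨hbad, hvs⟩) x hx
      exact hlink.eq_of_isBad hR₁ hxbad hbad (hxs.trans hvs.symm)) hw
  have hclique : G.IsClique (G.neighborSet r) := by
    by_contra hr
    obtain ⟨w, hw, hw2⟩ := hdf.exists_adj_distFrom_eq_two hG hrφ fun h => hr fun a ha b hb hab =>
      (hφ a b).1 (h ((hφ r a).2 ha) ((hφ r b).2 hb) (φ.injective.ne hab))
    exact hnochild hw hw2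
  have hcover : Set.univ ⊆
      insert r (insert (φ r) ((linkGraph G r).neighborSet (φ r))) := fun u _ => by
    refine or_iff_not_imp_left.2 fun hur => or_iff_not_imp_left.2 fun huv => ?_
    have hru := hr hclique u hur
    exact (linkGraph_adj hG).2 ⟨hclique hrφ hru (Ne.symm huv), hrφ, hru⟩
  have : (6 : ℕ∞) ≤ 4 + 1 := calc
    6 ≤ (Set.univ : Set V).encard := by rwa [Set.encard_univ]
    _ ≤ _ := Set.encard_le_encard hcover
    _ ≤ _ := Set.encard_insert_le _ _
    _ ≤ 4 + 1 := by gcongr; exact hlink.encard_le_four_of_isBad hR₁ hbad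
  norm_num at this

end IsDiamondFree

/-! ### Triangle-free graphs -/

section CliqueFree

variable {G : SimpleGraph V} {r u v w a b c : V} {R₁ R₂ R R' : Set V} {φ : Equiv.Perm V}

theorem not_adj_of_cliqueFree_three (htf : G.CliqueFree 3) (hab : G.Adj a b) (hac : G.Adj a c) :
    ¬ G.Adj b c := fun hbc =>
  isIndepSet_neighborSet_of_triangleFree G htf a hab hac hbc.ne hbc

theorem isDiamondFree_of_cliqueFree (htf : G.CliqueFree 3) : IsDiamondFree G :=
  fun _ _ _ _ hab hac hbc => absurd hbc (not_adj_of_cliqueFree_three htf hab hac)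

theorem linkGraph_eq_bot (htf : G.CliqueFree 3) (hG : G.Connected) : linkGraph G r = ⊥ := by
  ext u v
  rw [linkGraph_adj hG, bot_adj, iff_false]
  exact fun h => not_adj_of_cliqueFree_three htf h.2.1 h.2.2 h.1

theorem eq_or_distFrom_eq_two (htf : G.CliqueFree 3) (hG : G.Connected) (hrv : G.Adj r v)
    (hva : G.Adj v a) : a = r ∨ distFrom G {r} a = 2 :=
  (mem_insert_neighborSet_or_distFrom_eq_two hG hrv hva).imp_left fun h =>
    h.resolve_right fun h => by
      rw [linkGraph_eq_bot htf hG] at h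
      exact h

/-- The neighbours of `v` at distance two from `r`; of interest when `v` is a neighbour of `r`. -/
def children (G : SimpleGraph V) (r v : V) : Set V :=
  {c | G.Adj v c ∧ distFrom G {r} c = 2}

/-- The neighbours of `r` that are not distinguished from a centre of degree at least three by
`centeredRed G r R₁ R`: all their children, of which there are several, are marked roots attached
to them. -/
structure IsFull (G : SimpleGraph V) (r : V) (R : Set V) (v : V) : Prop where
  adj : G.Adj r v
  nontrivial : (children G r v).Nontrivial
  marked ⦃c : V⦄ : c ∈ children G r v → (c ∈ R ∧ c ∈ (farGraph G r).support) ∧ v = parent G {r} c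

theorem IsFull.mono (h : IsFull G r R v)
    (hR : ∀ c ∈ children G r v, c ∈ R → v = parent G {r} c → c ∈ R') : IsFull G r R' v :=
  ⟨h.adj, h.nontrivial, fun c hc =>
    have ⟨⟨hcR, hsupp⟩, hp⟩ := h.marked hc
    ⟨⟨hR c hc hcR hp, hsupp⟩, hp⟩⟩

theorem IsFull.isClosedAt (htf : G.CliqueFree 3) (hG : G.Connected) (h : IsFull G r R₂ v) :
    IsClosedAt G (centeredRed G r R₁ R₂) v := fun b hvb hblue => by
  obtain rfl | hb := eq_or_distFrom_eq_two htf hG h.adj hvb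
  · rw [adj_comm, centeredRed_adj_center hG h.adj, not_not, linkGraph_eq_bot htf hG,
      support_bot] at hblue
    exact absurd hblue.2 (Set.notMem_empty v)
  · have hv := (distFrom_singleton_eq_one hG).2 h.adj
    refine absurd ?_ hblue
    rw [adj_comm, centeredRed_adj_lower hvb.symm (by omega) hb.ge]
    exact h.marked ⟨hvb, hb⟩

theorem exists_isFull_insert (hv : IsFull G r R v) (huniq : ∀ u, IsFull G r R u → u = v)
    (hex : ∃ u, IsFull G r (insert w (R \ {c})) u) (hc : c ∈ children G r v) (hcw : c ≠ w) :
    ∃ u, IsFull G r (insert w (R \ {c})) u ∧ w ∈ children G r u ∧ u ≠ v := by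
  obtain ⟨u, hu⟩ := hex
  have huv : u ≠ v := by
    rintro rfl
    exact (hu.marked hc).1.1.elim hcw fun h => h.2 rfl
  refine ⟨u, hu, by_contra fun hwu => huv (huniq u (hu.mono fun d hd hdR _ => ?_)), huv⟩
  exact (hdR.resolve_left fun h => hwu (h ▸ hd)).1

theorem exists_isTransversal_not_existsUnique_isFull (G : SimpleGraph V) (r : V) :
    ∃ R, IsTransversal (farGraph G r) R ∧ ¬ ∃! v, IsFull G r R v := by
  by_contra! hno
  obtain ⟨R, hR, -⟩ := exists_isTransversal_mem (farGraph G r) r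
  obtain ⟨v, hv, huniq⟩ := hno R hR
  obtain ⟨c₁, hc₁, c₂, hc₂, hne⟩ := hv.nontrivial
  obtain ⟨⟨hcR₁, w₁, (hw₁ : (farGraph G r).Adj c₁ w₁)⟩, hp₁⟩ := hv.marked hc₁
  obtain ⟨⟨hcR₂, w₂, (hw₂ : (farGraph G r).Adj c₂ w₂)⟩, hp₂⟩ := hv.marked hc₂
  have hw₂R : w₂ ∉ R := fun h => hR.not_adj hcR₂ h hw₂
  have hw : w₂ ≠ w₁ := by
    rintro rfl
    exact hne (hR.eq_of_reachable hcR₁ hcR₂ (hw₁.reachable.trans hw₂.symm.reachable))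
  have hR₁ := hR.swap hcR₁ hw₁.reachable
  have hR₂ := hR.swap hcR₂ hw₂.reachable
  have hR₁₂ := hR₁.swap (Or.inr ⟨hcR₂, hne.symm⟩) hw₂.reachable
  obtain ⟨y₁, hy₁, -, hyv₁⟩ := exists_isFull_insert hv huniq (hno _ hR₁).exists hc₁ hw₁.ne
  obtain ⟨y₂, hy₂, hwy₂, hyv₂⟩ := exists_isFull_insert hv huniq (hno _ hR₂).exists hc₂ hw₂.ne
  have hfull₁ : IsFull G r (insert w₂ (insert w₁ (R \ {c₁}) \ {c₂})) y₁ :=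
    hy₁.mono fun c _ hc hp => Or.inr ⟨hc, by
      rintro rfl
      exact hyv₁ (hp.trans hp₂.symm)⟩
  have hfull₂ : IsFull G r (insert w₂ (insert w₁ (R \ {c₁}) \ {c₂})) y₂ :=
    hy₂.mono fun c _ hc hp => hc.imp_right fun hc => ⟨Or.inr ⟨hc.1, by
      rintro rfl
      exact hyv₂ (hp.trans hp₁.symm)⟩, hc.2⟩
  obtain rfl := (hno _ hR₁₂).unique hfull₁ hfull₂
  exact (hy₁.marked hwy₂).1.1.elim hw fun h => hw₂R h.1

theorem isFull_apply (htf : G.CliqueFree 3) (hG : G.Connected)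
    (hR₁ : IsTransversal (linkGraph G r) R₁) (hR₂ : IsTransversal (farGraph G r) R₂)
    (hr : 2 < (G.neighborSet r).encard) (hφ : IsAut G φ)
    (hred : IsAut (centeredRed G r R₁ R₂) φ) (hrφ : G.Adj r (φ r)) : IsFull G r R₂ (φ r) := by
  have hdf := isDiamondFree_of_cliqueFree htf
  have hv := (hdf.isCentre hG hR₁).apply hφ hred
  refine ⟨hrφ, ?_, fun c hc => hdf.red_child_of_isCentre hG hR₂ hrφ hv hc.1 hc.2⟩
  have hsub : φ '' G.neighborSet r \ {r} ⊆ children G r (φ r) := by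
    rintro _ ⟨⟨a, ha, rfl⟩, hne⟩
    have hφa := (hφ r a).2 ha
    exact ⟨hφa, (eq_or_distFrom_eq_two htf hG hrφ hφa).resolve_left hne⟩
  refine Set.Nontrivial.mono (Set.one_lt_encard_iff_nontrivial.1 ?_) hsub
  calc (1 : ℕ∞) < (G.neighborSet r).encard - 1 := lt_tsub_iff_right.2 hr
    _ = (φ '' G.neighborSet r).encard - 1 := by rw [φ.injective.injOn.encard_image]
    _ ≤ _ := Set.encard_tsub_one_le_encard_sdiff_singleton _ r

theorem distinguishable_of_two_lt_encard_neighborSet (htf : G.CliqueFree 3) (hG : G.Connected)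
    (hr : 2 < (G.neighborSet r).encard) : Distinguishable G := by
  obtain ⟨R₁, hR₁, -⟩ := exists_isTransversal_mem (linkGraph G r) r
  obtain ⟨R₂, hR₂, hfull⟩ := exists_isTransversal_not_existsUnique_isFull G r
  refine (isDiamondFree_of_cliqueFree htf).distinguishable_of_not_adj_apply hG hR₁ hR₂
    fun φ hφ hred hrφ => ?_
  obtain ⟨u, hu, hne⟩ : ∃ u, IsFull G r R₂ u ∧ u ≠ φ r := by
    by_contra! h
    exact hfull ⟨φ r, isFull_apply htf hG hR₁ hR₂ hr hφ hred hrφ, h⟩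
  have hclosed : IsClosedAt G (centeredRed G r R₁ R₂) (φ.symm u) :=
    (hu.isClosedAt htf hG).apply hφ.symm hred.symm
  have hdist := mt (not_isClosedAt hG hR₂) (not_not.2 hclosed)
  have hru : φ.symm u ≠ r := fun h => hne (φ.symm_apply_eq.1 h)
  have h0 := (distFrom_singleton_eq_zero hG).not.2 hru
  have hadj : G.Adj r (φ.symm u) := (distFrom_singleton_eq_one hG).1 (by omega)
  rw [← hφ, φ.apply_symm_apply] at hadj
  exact not_adj_of_cliqueFree_three htf hrφ hu.adj hadj

theorem eq_or_eq_of_encard_le_two {s : Set V} (hs : s.encard ≤ 2) (ha : a ∈ s) (hb : b ∈ s)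
    (hab : a ≠ b) (hc : c ∈ s) : c = a ∨ c = b := by
  have h : {a, b} = s := (Set.toFinite _).eq_of_subset_of_encard_le (Set.pair_subset ha hb)
    (hs.trans (Set.encard_pair hab).ge)
  rwa [← h] at hc

theorem not_adj_of_encard_neighborSet_le_two (htf : G.CliqueFree 3) (hG : G.Connected)
    (hcard : 6 ≤ ENat.card V) (hdeg : ∀ v, (G.neighborSet v).encard ≤ 2)
    (hu : distFrom G {r} u = 2) (hw : distFrom G {r} w = 2) : ¬ G.Adj u w := fun huw => by
  have hr := (distFrom_singleton_eq_zero hG (r := r)).2 rfl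
  obtain ⟨hux, hxj⟩ := parent_singleton_spec hG (v := u) (r := r) (by omega)
  obtain ⟨hwy, hyj⟩ := parent_singleton_spec hG (v := w) (r := r) (by omega)
  generalize parent G {r} u = x at hux hxj
  generalize parent G {r} w = y at hwy hyj
  have hrx := (distFrom_singleton_eq_one hG (r := r) (v := x)).1 (by omega)
  have hry := (distFrom_singleton_eq_one hG (r := r) (v := y)).1 (by omega)
  have hxy : x ≠ y := by
    rintro rfl
    exact not_adj_of_cliqueFree_three htf hux.symm hwy.symm huw
  have ne_of_dist {p q} (h : distFrom G {r} p ≠ distFrom G {r} q) : p ≠ q :=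
    fun hpq => h (hpq ▸ rfl)
  have hcover : Set.univ ⊆ ({r, x, y, u, w} : Set V) := fun v _ => by
    refine forall_of_connected hG (Or.inl rfl : r ∈ ({r, x, y, u, w} : Set V)) ?_ v
    rintro p q (rfl | rfl | rfl | rfl | rfl) hpq
    · obtain rfl | rfl := eq_or_eq_of_encard_le_two (hdeg _) hrx hry hxy hpq <;> simp
    · obtain rfl | rfl := eq_or_eq_of_encard_le_two (hdeg _) hux.symm hrx.symm
        (ne_of_dist (by omega)) hpq <;> simp
    · obtain rfl | rfl := eq_or_eq_of_encard_le_two (hdeg _) hwy.symm hry.symm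
        (ne_of_dist (by omega)) hpq <;> simp
    · obtain rfl | rfl := eq_or_eq_of_encard_le_two (hdeg _) huw hux
        (ne_of_dist (by omega)) hpq <;> simp
    · obtain rfl | rfl := eq_or_eq_of_encard_le_two (hdeg _) huw.symm hwy
        (ne_of_dist (by omega)) hpq <;> simp
  have : (6 : ℕ∞) ≤ 5 := calc
    6 ≤ (Set.univ : Set V).encard := by rwa [Set.encard_univ]
    _ ≤ _ := Set.encard_le_encard hcover
    _ ≤ 5 := by
      classical
      simpa [← Set.encard_coe_eq_coe_finsetCard] using
        Nat.cast_le (α := ℕ∞).2 (Finset.card_le_five (a := r) (b := x) (c := y) (d := u) (e := w))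
  norm_num at this

theorem exists_nontrivial_neighborSet (hG : G.Connected) (hcard : 6 ≤ ENat.card V) :
    ∃ r, (G.neighborSet r).Nontrivial := by
  by_contra! hsub
  obtain ⟨r⟩ := hG.nonempty
  have hcover : Set.univ ⊆ insert r (G.neighborSet r) := fun v _ =>
    forall_of_connected hG (p := (· ∈ insert r (G.neighborSet r))) (Or.inl rfl) (by
      rintro u v (rfl | hu) huv
      · exact Or.inr huv
      · exact Or.inl (hsub u huv hu.symm)) v
  have : (6 : ℕ∞) ≤ 1 + 1 := calc
    6 ≤ (Set.univ : Set V).encard := by rwa [Set.encard_univ]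
    _ ≤ _ := Set.encard_le_encard hcover
    _ ≤ _ := Set.encard_insert_le _ _
    _ ≤ 1 + 1 := by
      gcongr
      exact Set.encard_le_one_iff_subsingleton.2 (hsub r)
  norm_num at this

theorem distinguishable_of_encard_neighborSet_le_two (htf : G.CliqueFree 3) (hG : G.Connected)
    (hcard : 6 ≤ ENat.card V) (hdeg : ∀ v, (G.neighborSet v).encard ≤ 2) : Distinguishable G := by
  have hdf := isDiamondFree_of_cliqueFree htf
  obtain ⟨r, a, hra, b, hrb, hab⟩ := exists_nontrivial_neighborSet hG hcard
  obtain ⟨R₁, hR₁, -⟩ := exists_isTransversal_mem (linkGraph G r) r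
  obtain ⟨R₂, hR₂, -⟩ := exists_isTransversal_mem (farGraph G r) r
  refine hdf.distinguishable_of_not_adj_apply hG hR₁ hR₂ fun φ hφ hred hrφ => ?_
  have hv := (hdf.isCentre hG hR₁).apply hφ hred
  have happly {x} (hx : G.Adj r x) : φ x = r := by
    have hφx := (hφ r x).2 hx
    refine (eq_or_distFrom_eq_two htf hG hrφ hφx).resolve_right fun h => ?_
    obtain ⟨⟨-, y, hy⟩, -⟩ := hdf.red_child_of_isCentre hG hR₂ hrφ hv hφx h
    exact not_adj_of_encard_neighborSet_le_two htf hG hcard hdeg h (hy.2.1 ▸ h) hy.1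
  exact hab (φ.injective ((happly hra).trans (happly hrb).symm))

end CliqueFree

theorem distinguishable {G : SimpleGraph V} (hG : G.Connected) (hcard : 6 ≤ ENat.card V) :
    Distinguishable G := by
  classical
  by_cases hdf : IsDiamondFree G
  · by_cases htf : G.CliqueFree 3
    · by_cases hdeg : ∀ v, (G.neighborSet v).encard ≤ 2
      · exact distinguishable_of_encard_neighborSet_le_two htf hG hcard hdeg
      · push Not at hdeg
        obtain ⟨r, hr⟩ := hdeg
        exact distinguishable_of_two_lt_encard_neighborSet htf hG hr
    · simp only [CliqueFree, not_forall, not_not] at htf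
      obtain ⟨_, hclique⟩ := htf
      obtain ⟨a, b, c, hab, hac, hbc, -⟩ := is3Clique_iff.1 hclique
      obtain ⟨r, s, t, hrs, hrt, hst, hr⟩ := exists_triangle_isClique_imp hG hab hac hbc
      exact hdf.distinguishable_of_triangle hG hcard hrs hrt hst hr
  · simp only [IsDiamondFree, not_forall] at hdf
    obtain ⟨a, b, c, d, hab, hac, hbc, hbd, hcd, had, hnad⟩ := hdf
    exact distinguishable_of_diamond hG hbc hab.symm hac.symm hbd.symm hcd.symm had.symm
      fun h => hnad h.symm

end SmallIndex

/-- **Main theorem.** Every finite or infinite connected graph on at least 6 vertices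
admits an edge colouring with 2 colours breaking every small automorphism,
i.e. `D'_s(G) ≤ 2`. -/
theorem small_distinguishing_index_le_two {V : Type*} (G : SimpleGraph V)
    (hconn : G.Connected) (hcard : 6 ≤ Cardinal.mk V) :
    ∃ c : Sym2 V → Fin 2, ∀ φ : G ≃g G, IsSmall G φ → Breaks G c φ := by
  obtain ⟨D, hle, hD⟩ := SmallIndex.distinguishable hconn (Cardinal.ofNat_le_toENat.2 hcard)
  classical
  refine ⟨fun e => if e ∈ D.edgeSet then 1 else 0, fun φ ⟨v, hv⟩ hφ => ?_⟩
  refine hD φ.toEquiv (fun _ _ => φ.map_adj_iff) (fun u w => ?_) v hv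
  by_cases h : G.Adj u w
  · have hcol := hφ u w h
    simp only [mem_edgeSet] at hcol
    change D.Adj (φ u) (φ w) ↔ D.Adj u w
    split_ifs at hcol <;> simp_all
  · exact iff_of_false (fun h' => h (φ.map_adj_iff.1 (hle h'))) fun h' => h (hle h')
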